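/- Let V ⊆ V' be an immediate extension of valuation rings and K ⊆ K' the corresponding extension of fraction fields. If the field extension K'/K is algebraic, then V' is a filtered union of its V-subalgebras that are complete intersection V-algebras of finite type; that is, the set of such subalgebras is nonempty, directed under inclusion, and its union is all of V'. -/

import Mathlib

/-- An extension `V ⊆ V'` of valuation rings (given by an injective algebra structure)
is *immediate* if it is local, the induced map of residue fields is an isomorphism,
and the induced map of value groups is an isomorphism. -/
def IsImmediateExtension (V V' : Type*) [CommRing V] [IsLocalRing V]
    [CommRing V'] [IsLocalRing V'] [Algebra V V'] : Prop :=
  Function.Injective (algebraMap V V') ∧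
  (∀ a : V, algebraMap V V' a ∈ IsLocalRing.maximalIdeal V' ↔
    a ∈ IsLocalRing.maximalIdeal V) ∧
  (∀ x : V', ∃ a : V, x - algebraMap V V' a ∈ IsLocalRing.maximalIdeal V') ∧
  (∀ x : V', x ≠ 0 → ∃ a b : V, a ≠ 0 ∧ b ≠ 0 ∧
    Associated (algebraMap V V' a) (x * algebraMap V V' b))


/-- A commutative ring `S` is a *filtered union* of those of its `R`-subalgebras
satisfying the class (predicate) `C` if the collection of subalgebras satisfying `C`
is nonempty, directed under inclusion, and its union is all of `S`. -/
def Subalgebra.IsFilteredUnion {R S : Type*} [CommSemiring R] [CommSemiring S]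
    [Algebra R S] (C : Subalgebra R S → Prop) : Prop :=
  (∃ A, C A) ∧ DirectedOn (· ≤ ·) {A | C A} ∧ ∀ s : S, ∃ A, C A ∧ s ∈ A

/-- An `R`-algebra `A` is a *complete intersection `R`-algebra of finite type* if it is
isomorphic to `R[Y₁, …, Y_N]/(f₁, …, f_r)` for a regular sequence `f₁, …, f_r` of the
polynomial ring `R[Y₁, …, Y_N]`. -/
def Algebra.IsCompleteIntersectionOfFiniteType (R A : Type*) [CommRing R] [CommRing A]
    [Algebra R A] : Prop :=
  ∃ (N r : ℕ) (f : Fin r → MvPolynomial (Fin N) R),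
    RingTheory.Sequence.IsRegular (MvPolynomial (Fin N) R) (List.ofFn f) ∧
    Nonempty ((MvPolynomial (Fin N) R ⧸ Ideal.span (Set.range f)) ≃ₐ[R] A)

/-!
Let `E` be a finite subset of `V'` and `L = K(E)`. The point is to present `L` over `K` by
finitely many generators `y i` in `V'` and *as many* relations `F i`, in such a way that each
`F i` has coefficients in `V` and reduces, modulo the maximal ideal `𝔪` of `V`, to a monic
polynomial in the single variable `X i`, while the elements of `E` are polynomials in the `y i`
over `V`. In a tower of fields such presentations can be concatenated, so it suffices to treat
`L = K(x)`. Then one argues as in Kaplansky's theory of immediate extensions: transport the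
valuation to `K[X]` and approximate by monic polynomials `Q` of a given degree and ever smaller
value; since the extension is immediate, there is no smallest value. A polynomial not eventually
of the form `c (1 + ε)` with `c` constant and `ε` small has a `Q`-adic expansion which, rescaled,
reduces to a monic polynomial in `Q`. Taking such a polynomial of least degree as the next `Q`,
one finally reaches the minimal polynomial of `x`.

Modulo `𝔪` each `F i` is monic in its own variable, so the `F i` form a regular sequence there, in
every order. Over `V` this yields, by descent to a noetherian local subring, that an element
annihilated modulo some of the `F i` by a nonzero constant is congruent modulo `𝔪` to an element
of the ideal they generate. As `V`-saturated ideals of polynomial rings over `V` are finitely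
generated, Nakayama's lemma provides a polynomial `s ≡ 1` modulo `𝔪` after whose inversion the
`F i` are a regular sequence generating the kernel of the evaluation at `y`. Since `s(y)` is a
unit of the local ring `V'`, the subalgebra `V[y, 1 / s(y)]` of `V'` is a complete intersection
containing `E`.
-/

section RegularModulo

open MvPolynomial

variable {R ι σ : Type*} [CommRing R] {F : ι → MvPolynomial σ R} {S : Set ι} {I : Ideal R}

/-- The ideal of `R[σ]` generated by `I` and the `F i` with `i ∈ S`; membership is congruence to
an element of `(F i : i ∈ S)` modulo `I`. -/
noncomputable def relIdeal (F : ι → MvPolynomial σ R) (S : Set ι) (I : Ideal R) :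
    Ideal (MvPolynomial σ R) :=
  I.map C ⊔ Ideal.span (F '' S)

/-- The `F i` form a regular sequence over `R ⧸ I`, in every order. -/
def IsRegularModulo (F : ι → MvPolynomial σ R) (I : Ideal R) : Prop :=
  ∀ (S : Finset ι), ∀ j ∉ S, ∀ g, g * F j ∈ relIdeal F S I → g ∈ relIdeal F S I

lemma relIdeal_mono_right {J : Ideal R} (h : I ≤ J) : relIdeal F S I ≤ relIdeal F S J :=
  sup_le_sup_right (Ideal.map_mono h) _

lemma relIdeal_mono_left {T : Set ι} (h : S ⊆ T) : relIdeal F S I ≤ relIdeal F T I :=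
  sup_le_sup_left (Ideal.span_mono (Set.image_mono h)) _

lemma relIdeal_insert (F : ι → MvPolynomial σ R) (S : Set ι) (I : Ideal R) (j : ι) :
    relIdeal F (insert j S) I = relIdeal F S I ⊔ Ideal.span {F j} := by
  rw [relIdeal, relIdeal, Set.image_insert_eq, Ideal.span_insert, sup_comm (Ideal.span {F j}),
    sup_assoc]

lemma apply_mem_relIdeal {j : ι} (hj : j ∈ S) : F j ∈ relIdeal F S I :=
  Ideal.mem_sup_right (Ideal.subset_span ⟨j, hj, rfl⟩)

lemma C_mem_relIdeal {a : R} (ha : a ∈ I) : C a ∈ relIdeal F S I :=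
  Ideal.mem_sup_left (Ideal.mem_map_of_mem _ ha)

lemma relIdeal_top : relIdeal F S ⊤ = ⊤ := by
  rw [relIdeal, Ideal.map_top, top_sup_eq]

lemma exists_sub_C_mul_mem_relIdeal {c : R} {g : MvPolynomial σ R}
    (h : g ∈ relIdeal F S (I ⊔ Ideal.span {c})) : ∃ q, g - C c * q ∈ relIdeal F S I := by
  rw [relIdeal, Ideal.map_sup, Ideal.map_span, Set.image_singleton, sup_right_comm] at h
  obtain ⟨p, hp, _, hq, rfl⟩ := Submodule.mem_sup.1 h
  obtain ⟨q, rfl⟩ := Ideal.mem_span_singleton.1 hq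
  exact ⟨q, by rwa [add_sub_cancel_right]⟩

lemma C_mul_mem_relIdeal_of_mem_colon {c : R} {g : MvPolynomial σ R}
    (h : g ∈ relIdeal F S (I.colon {c})) : C c * g ∈ relIdeal F S I := by
  obtain ⟨p, hp, q, hq, rfl⟩ := Submodule.mem_sup.1 h
  rw [mul_add]
  refine add_mem (Ideal.mem_sup_left (mem_map_C_iff.2 fun d => ?_))
    (Ideal.mem_sup_right (Ideal.mul_mem_left _ _ hq))
  rw [coeff_C_mul, mul_comm]
  exact Submodule.mem_colon_singleton.1 (mem_map_C_iff.1 hp d)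

lemma map_mem_relIdeal {R' : Type*} [CommRing R'] (φ : R →+* R') {J : Ideal R'}
    (hIJ : I.map φ ≤ J) {g : MvPolynomial σ R} (hg : g ∈ relIdeal F S I) :
    map φ g ∈ relIdeal (fun i => map φ (F i)) S J := by
  suffices relIdeal F S I ≤ (relIdeal (fun i => map φ (F i)) S J).comap (map φ) from this hg
  refine sup_le (Ideal.map_le_iff_le_comap.2 fun a ha => ?_) (Ideal.span_le.2 ?_)
  · rw [Ideal.mem_comap, Ideal.mem_comap, map_C]
    exact C_mem_relIdeal (hIJ (Ideal.mem_map_of_mem _ ha))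
  · rintro _ ⟨i, hi, rfl⟩
    exact apply_mem_relIdeal (F := fun i => map φ (F i)) hi

/-- Over `R ⧸ I ⊔ (c)` the sequence is regular, so the torsion `Tor₁(R ⧸ I ⊔ (c), -)` of the
successive quotients vanishes: multiplication by `c` has no more kernel than on `R ⧸ I`. -/
lemma IsRegularModulo.mem_relIdeal_colon {c : R} (hF : IsRegularModulo F (I ⊔ Ideal.span {c}))
    (S : Finset ι) {g : MvPolynomial σ R} (hg : C c * g ∈ relIdeal F S I) :
    g ∈ relIdeal F S (I.colon {c}) := by
  classical
  induction S using Finset.induction_on generalizing g with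
  | empty =>
    rw [relIdeal, Finset.coe_empty, Set.image_empty, Ideal.span_empty, sup_bot_eq,
      mem_map_C_iff] at hg ⊢
    intro d
    rw [Submodule.mem_colon_singleton, smul_eq_mul, mul_comm, ← coeff_C_mul]
    exact hg d
  | insert j S hj ih =>
    rw [Finset.coe_insert, relIdeal_insert] at hg
    obtain ⟨u, hu, _, hw, huw⟩ := Submodule.mem_sup.1 hg
    obtain ⟨h, rfl⟩ := Ideal.mem_span_singleton.1 hw
    have hh : h * F j ∈ relIdeal F S (I ⊔ Ideal.span {c}) := by
      rw [mul_comm, ← sub_eq_of_eq_add' huw.symm]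
      exact sub_mem (Ideal.mul_mem_right _ _ (C_mem_relIdeal
        (Ideal.mem_sup_right (Ideal.mem_span_singleton_self c))))
        (relIdeal_mono_right le_sup_left hu)
    obtain ⟨q, hq⟩ := exists_sub_C_mul_mem_relIdeal (hF S j hj h hh)
    have hgq : C c * (g - q * F j) ∈ relIdeal F S I := by
      have : C c * (g - q * F j) = u + (h - C c * q) * F j := by
        rw [mul_sub, ← huw]; ring
      rw [this]
      exact add_mem hu (Ideal.mul_mem_right _ _ hq)
    rw [Finset.coe_insert, ← sub_add_cancel g (q * F j)]
    exact add_mem (relIdeal_mono_left (Set.subset_insert _ _) (ih hgq))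
      (Ideal.mul_mem_left _ _ (apply_mem_relIdeal (Set.mem_insert _ _)))

/-- Regularity ascends along `0 → R ⧸ (I : c) → R ⧸ I → R ⧸ I ⊔ (c) → 0`. -/
lemma IsRegularModulo.of_sup_of_colon {c : R} (hsup : IsRegularModulo F (I ⊔ Ideal.span {c}))
    (hcolon : IsRegularModulo F (I.colon {c})) : IsRegularModulo F I := by
  intro S j hj g hg
  obtain ⟨q, hq⟩ :=
    exists_sub_C_mul_mem_relIdeal (hsup S j hj g (relIdeal_mono_right le_sup_left hg))
  have hcq : C c * (q * F j) ∈ relIdeal F S I := by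
    have : C c * (q * F j) = g * F j - (g - C c * q) * F j := by ring
    rw [this]
    exact sub_mem hg (Ideal.mul_mem_right _ _ hq)
  rw [← sub_add_cancel g (C c * q)]
  exact add_mem hq
    (C_mul_mem_relIdeal_of_mem_colon (hcolon S j hj q (hsup.mem_relIdeal_colon S hcq)))

lemma IsRegularModulo.of_pow_le [IsNoetherianRing R] {m : Ideal R} [m.IsMaximal]
    (hF : IsRegularModulo F m) {N : ℕ} (hN : m ^ N ≤ I) : IsRegularModulo F I := by
  induction I using WellFoundedGT.induction with
  | ind I ih =>
    by_cases htop : I = ⊤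
    · subst htop
      intro S j _ g _
      rw [relIdeal_top]
      exact Submodule.mem_top
    have : Nontrivial (R ⧸ I) := Ideal.Quotient.nontrivial_iff.2 htop
    obtain ⟨P, hP⟩ := associatedPrimes.nonempty R (R ⧸ I)
    obtain ⟨hP, x, hx⟩ := isAssociatedPrime_iff.1 hP
    obtain ⟨c, rfl⟩ := Ideal.Quotient.mk_surjective x
    have hcolon : I.colon {c} = P := by
      ext a
      rw [hx, Submodule.mem_colon_singleton, Submodule.mem_colon_singleton, Submodule.mem_bot,
        ← Ideal.Quotient.eq_zero_iff_mem]
      rfl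
    have hPm : m = P := Ideal.IsMaximal.eq_of_le ‹_› hP.ne_top
      (hP.le_of_pow_le (hN.trans (hcolon ▸ fun a ha =>
        Submodule.mem_colon_singleton.2 (I.mul_mem_right c ha))))
    refine .of_sup_of_colon (c := c) (ih _ ?_ (hN.trans le_sup_left)) ?_
    · refine left_lt_sup.2 fun hc => hP.ne_top ?_
      rw [← hcolon, Ideal.eq_top_iff_one, Submodule.mem_colon_singleton, one_smul]
      exact hc (Ideal.mem_span_singleton_self c)
    · rwa [hcolon, ← hPm]

end RegularModulo

section MonicModulo

open MvPolynomial

variable {R σ : Type*} [CommRing R] {F : σ → MvPolynomial σ R} {f : σ → Polynomial R}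
  {m : Ideal R}

lemma map_aeval_X {R' : Type*} [CommRing R'] (φ : R →+* R') (i : σ) (p : Polynomial R) :
    map φ (Polynomial.aeval (X i) p) = Polynomial.aeval (X i) (p.map φ) := by
  rw [Polynomial.aeval_def, Polynomial.hom_eval₂, Polynomial.aeval_def, Polynomial.eval₂_map,
    map_X]
  congr 1
  ext a
  simp [algebraMap_eq]

/-- The quotient map modulo `I`, except that the variable `X j` is kept free as the variable of a
polynomial ring over the quotient. -/
noncomputable def freeVariable (I : Ideal (MvPolynomial σ R)) [DecidableEq σ] (j : σ) :
    MvPolynomial σ R →ₐ[R] Polynomial (MvPolynomial σ R ⧸ I) :=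
  aeval (Function.update (fun i => Polynomial.C (Ideal.Quotient.mk I (X i))) j Polynomial.X)

section

variable [DecidableEq σ] {I : Ideal (MvPolynomial σ R)} {j : σ} {p : MvPolynomial σ R}

lemma mem_of_freeVariable_eq_zero (h : freeVariable I j p = 0) : p ∈ I := by
  have heval : ((Polynomial.aeval (Ideal.Quotient.mk I (X j))).restrictScalars R).comp
      (freeVariable I j) = Ideal.Quotient.mkₐ R I := by
    ext i
    obtain rfl | hij := eq_or_ne i j
    · simp [freeVariable]
    · simp [freeVariable, hij]
  have hp := DFunLike.congr_fun heval p
  rw [AlgHom.comp_apply, h, map_zero] at hp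
  exact Ideal.Quotient.eq_zero_iff_mem.1 hp.symm

lemma freeVariable_eq_zero_of_mem_map (hm : m.map C ≤ I) (hp : p ∈ m.map C) :
    freeVariable I j p = 0 := by
  suffices m.map C ≤ RingHom.ker (freeVariable I j) from this hp
  refine Ideal.map_le_iff_le_comap.2 fun a ha => ?_
  have ha0 : algebraMap R (MvPolynomial σ R ⧸ I) a = 0 :=
    Ideal.Quotient.eq_zero_iff_mem.2 (hm (Ideal.mem_map_of_mem _ ha))
  rw [Ideal.mem_comap, RingHom.mem_ker, ← algebraMap_eq, AlgHom.commutes,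
    IsScalarTower.algebraMap_apply R (MvPolynomial σ R ⧸ I), ha0, map_zero]

lemma freeVariable_aeval_X_self (q : Polynomial R) :
    freeVariable I j (Polynomial.aeval (X j) q) = q.map (algebraMap R (MvPolynomial σ R ⧸ I)) := by
  rw [← Polynomial.aeval_algHom_apply, freeVariable, aeval_X, Function.update_self,
    Polynomial.aeval_X_left_eq_map]

lemma freeVariable_aeval_X_of_ne {i : σ} (hij : i ≠ j) {q : Polynomial R}
    (hq : Polynomial.aeval (X i) q ∈ I) : freeVariable I j (Polynomial.aeval (X i) q) = 0 := by
  rw [← Polynomial.aeval_algHom_apply, freeVariable, aeval_X, Function.update_of_ne hij]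
  change Polynomial.aeval
    (((Algebra.ofId (MvPolynomial σ R ⧸ I) (Polynomial (MvPolynomial σ R ⧸ I))).restrictScalars
      R) (Ideal.Quotient.mkₐ R I (X i))) q = 0
  rw [Polynomial.aeval_algHom_apply, Polynomial.aeval_algHom_apply, Ideal.Quotient.mkₐ_eq_mk,
    Ideal.Quotient.eq_zero_iff_mem.2 hq, map_zero]

end

/-- Modulo `m` and the other `F i`, the polynomial `F j ≡ f j (X j)` is monic in the free
variable `X j`. -/
lemma isRegularModulo_of_monic (hf : ∀ i, (f i).Monic)
    (hF : ∀ i, F i - Polynomial.aeval (X i) (f i) ∈ m.map C) : IsRegularModulo F m := by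
  classical
  intro S j hj g hg
  have hm : m.map C ≤ relIdeal F S m := le_sup_left
  have hΘF : ∀ i, freeVariable (relIdeal F S m) j (F i) =
      freeVariable (relIdeal F S m) j (Polynomial.aeval (X i) (f i)) := fun i => by
    rw [← sub_eq_zero, ← map_sub]
    exact freeVariable_eq_zero_of_mem_map hm (hF i)
  have hker : relIdeal F S m ≤ RingHom.ker (freeVariable (relIdeal F S m) j) := by
    refine sup_le (fun p hp => freeVariable_eq_zero_of_mem_map hm hp) (Ideal.span_le.2 ?_)
    rintro _ ⟨i, hi, rfl⟩
    refine (hΘF i).trans (freeVariable_aeval_X_of_ne (by rintro rfl; exact hj hi) ?_)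
    rw [← sub_sub_self (F i) (Polynomial.aeval (X i) (f i))]
    exact sub_mem (apply_mem_relIdeal hi) (hm (hF i))
  apply mem_of_freeVariable_eq_zero (j := j)
  rw [← ((hf j).map (algebraMap R _)).mul_left_eq_zero_iff, ← freeVariable_aeval_X_self,
    ← hΘF, ← map_mul]
  exact hker hg

end MonicModulo

section Descent

lemma exists_noetherian_local_subring {R : Type*} [CommRing R] [IsLocalRing R] (T : Finset R) :
    ∃ L : Subring R, (T : Set R) ⊆ L ∧ IsNoetherianRing L ∧ IsLocalRing L ∧
      IsLocalHom L.subtype := by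
  let A : Subalgebra ℤ R := Algebra.adjoin ℤ (T : Set R)
  have : Algebra.FiniteType ℤ A :=
    (Subalgebra.fg_iff_finiteType A).1 (Subalgebra.fg_adjoin_finset T)
  have : IsNoetherianRing A := Algebra.FiniteType.isNoetherianRing ℤ A
  let P : Ideal A := (IsLocalRing.maximalIdeal R).comap (algebraMap A R)
  have hunit : ∀ y : P.primeCompl, IsUnit (algebraMap A R y) := fun y => by
    by_contra hy
    exact y.2 hy
  let φ : Localization.AtPrime P →+* R := IsLocalization.lift hunit
  have hφ : ∀ a, φ (algebraMap A _ a) = a := IsLocalization.lift_eq hunit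
  have hlocal : IsLocalHom φ := by
    refine ((IsLocalRing.local_hom_TFAE φ).out 0 2).2 ?_
    rw [← Localization.AtPrime.map_eq_maximalIdeal, Ideal.map_map, IsLocalization.lift_comp]
    exact Ideal.map_comap_le
  refine ⟨φ.range, fun x hx => ?_, inferInstance,
    IsLocalRing.of_surjective' φ.rangeRestrict φ.rangeRestrict_surjective, ⟨?_⟩⟩
  · exact ⟨algebraMap A _ ⟨x, Algebra.subset_adjoin hx⟩, hφ _⟩
  · rintro ⟨_, y, rfl⟩ hy
    exact ((isUnit_of_map_unit φ y hy).map φ.rangeRestrict)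

open MvPolynomial

variable {R σ : Type*} [CommRing R] {F : σ → MvPolynomial σ R} {f : σ → Polynomial R}
  [IsLocalRing R]

lemma IsRegularModulo.mem_relIdeal_maximalIdeal {ι : Type*} {F : ι → MvPolynomial σ R}
    [IsNoetherianRing R]
    (hF : IsRegularModulo F (IsLocalRing.maximalIdeal R)) {c : R} (hc : c ≠ 0) (S : Finset ι)
    {g : MvPolynomial σ R} (h : C c * g ∈ Ideal.span (F '' S)) :
    g ∈ relIdeal F S (IsLocalRing.maximalIdeal R) := by
  obtain ⟨N, hN⟩ : ∃ N, c ∉ IsLocalRing.maximalIdeal R ^ N := by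
    by_contra! hall
    have := Ideal.iInf_pow_eq_bot_of_isLocalRing (IsLocalRing.maximalIdeal R)
      (IsLocalRing.maximalIdeal.isMaximal R).ne_top
    exact hc ((Submodule.mem_bot R).1 (this ▸ (Submodule.mem_iInf _).2 hall))
  have hcolon : (IsLocalRing.maximalIdeal R ^ N).colon {c} ≤ IsLocalRing.maximalIdeal R :=
    IsLocalRing.le_maximalIdeal fun htop => hN <| by
      rwa [Ideal.eq_top_iff_one, Submodule.mem_colon_singleton, one_smul] at htop
  exact relIdeal_mono_right hcolon
    ((hF.of_pow_le le_sup_left).mem_relIdeal_colon S (Ideal.mem_sup_right h))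

lemma mem_relIdeal_maximalIdeal_of_C_mul_mem [Finite σ] (hf : ∀ i, (f i).Monic)
    (hF : ∀ i, F i - Polynomial.aeval (X i) (f i) ∈ (IsLocalRing.maximalIdeal R).map C)
    {c : R} (hc : c ≠ 0) (S : Finset σ) {g : MvPolynomial σ R}
    (h : C c * g ∈ Ideal.span (F '' S)) : g ∈ relIdeal F S (IsLocalRing.maximalIdeal R) := by
  classical
  have := Fintype.ofFinite σ
  obtain ⟨t, htS, e, he⟩ := (Submodule.mem_span_image_iff_exists_fun _).1 h
  let T : Finset R := insert c (g.coeffs ∪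
    (Finset.univ.biUnion fun i => (F i).coeffs ∪ (f i).coeffs) ∪
    (Finset.univ.biUnion fun i => (e i).coeffs))
  obtain ⟨L, hTL, hLnoeth, hLlocal, hL⟩ := exists_noetherian_local_subring T
  have hinj : Function.Injective L.subtype := Subtype.val_injective
  have hlift : ∀ p : MvPolynomial σ R, p.coeffs ⊆ T → ∃ q, map L.subtype q = p := fun p hp =>
    mem_range_map_iff_coeffs_subset.2 fun x hx => ⟨⟨x, hTL (hp hx)⟩, rfl⟩
  have hlift' : ∀ p : Polynomial R, p.coeffs ⊆ T → ∃ q, Polynomial.map L.subtype q = p :=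
    fun p hp => (Polynomial.mem_lifts _).1 <| (Polynomial.lifts_iff_coeffs_subset_range _).2
      fun x hx => ⟨⟨x, hTL (hp hx)⟩, rfl⟩
  obtain ⟨g₀, hg₀⟩ := hlift g (by grind)
  choose F₀ hF₀ using fun i => hlift (F i) (by grind)
  choose e₀ he₀ using fun i => hlift (e i) (by grind)
  choose f₀ hf₀ using fun i => hlift' (f i) (by grind)
  obtain ⟨c, rfl⟩ : ∃ c₀ : L, L.subtype c₀ = c := ⟨⟨c, hTL (by simp [T])⟩, rfl⟩
  have hreg : IsRegularModulo F₀ (IsLocalRing.maximalIdeal L) := by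
    refine isRegularModulo_of_monic (f := f₀)
      (fun i => hinj.monic_map_iff.2 (by rw [hf₀]; exact hf i)) fun i => mem_map_C_iff.2 fun d => ?_
    have := mem_map_C_iff.1 (hF i) d
    rwa [← hF₀, ← hf₀, ← map_aeval_X, ← map_sub, coeff_map, ← Ideal.mem_comap,
      IsLocalRing.maximalIdeal_comap] at this
  have hmem : C c * g₀ ∈ Ideal.span (F₀ '' S) := by
    refine (Submodule.mem_span_image_iff_exists_fun _).2 ⟨t, htS, e₀, ?_⟩
    apply map_injective L.subtype hinj
    simpa only [smul_eq_mul, map_mul, map_C, map_sum, hg₀, he₀, hF₀] using he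
  have := map_mem_relIdeal L.subtype (IsLocalRing.map_maximalIdeal_le L.subtype)
    (hreg.mem_relIdeal_maximalIdeal (fun h0 => hc (by rw [h0, map_zero])) S hmem)
  simpa only [hg₀, hF₀] using this

end Descent

section Saturated

/-- A submodule `W` is saturated if the quotient by `W` is torsion-free. -/
def IsSaturated {R M : Type*} [CommRing R] [AddCommGroup M] [Module R M] (W : Submodule R M) :
    Prop :=
  ∀ c : R, c ≠ 0 → ∀ x, c • x ∈ W → x ∈ W

section

variable {V M : Type*} [CommRing V] [AddCommGroup M] [Module V M] {W W' : Submodule V M}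

lemma IsSaturated.inf (hW : IsSaturated W) (hW' : IsSaturated W') : IsSaturated (W ⊓ W') :=
  fun c hc x hx => ⟨hW c hc x hx.1, hW' c hc x hx.2⟩

lemma IsSaturated.comap {N : Type*} [AddCommGroup N] [Module V N] (f : N →ₗ[V] M)
    (hW : IsSaturated W) : IsSaturated (W.comap f) := fun c hc x hx =>
  hW c hc (f x) (by rwa [← map_smul])

variable [IsDomain V] [ValuationRing V]

lemma IsSaturated.fg_of_le {N : Submodule V M} (hW : IsSaturated W) (hN : N.FG) (hWN : W ≤ N) :
    W.FG := by
  have : Module.Finite V N := Module.Finite.iff_fg.2 hN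
  have hsat : IsSaturated (W.comap N.subtype) := hW.comap _
  have : Module.Flat V (N ⧸ W.comap N.subtype) := by
    rw [Module.Flat.flat_iff_torsion_eq_bot_of_isBezout, eq_bot_iff]
    intro x hx
    obtain ⟨a, ha⟩ := (Submodule.mem_torsion_iff x).1 hx
    obtain ⟨y, rfl⟩ := Submodule.Quotient.mk_surjective _ x
    rw [Submonoid.smul_def, ← Submodule.Quotient.mk_smul, Submodule.Quotient.mk_eq_zero] at ha
    exact (Submodule.Quotient.mk_eq_zero _).2 (hsat a (nonZeroDivisors.coe_ne_zero a) y ha)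
  have : Module.Free V (N ⧸ W.comap N.subtype) := Module.free_of_flat_of_isLocalRing
  have : Module.FinitePresentation V (N ⧸ W.comap N.subtype) :=
    Module.finitePresentation_of_projective V _
  have hfg := Module.FinitePresentation.fg_ker _ (Submodule.mkQ_surjective (W.comap N.subtype))
  rw [Submodule.ker_mkQ] at hfg
  have hmap := hfg.map N.subtype
  rwa [Submodule.map_comap_eq_self (by rwa [Submodule.range_subtype])] at hmap

end

open MvPolynomial

variable {V σ : Type*} [CommRing V] [IsDomain V]

lemma isSaturated_homogeneousSubmodule (d : ℕ) : IsSaturated (homogeneousSubmodule σ V d) :=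
  fun c hc p hp e he => hp (by rw [coeff_smul, smul_eq_mul]; exact mul_ne_zero hc he)

variable [ValuationRing V]

lemma exists_eq_smul_of_mem_map_C {I : Ideal V} {r : MvPolynomial σ V} (hr : r ∈ I.map C) :
    ∃ a ∈ I, ∃ r', r = a • r' := by
  obtain ⟨a, ha⟩ := (IsBezout.isPrincipal_of_FG (Ideal.span (r.coeffs : Set V))
    ⟨r.coeffs, rfl⟩).principal
  have haI : a ∈ I := by
    suffices Ideal.span (r.coeffs : Set V) ≤ I from
      this (ha ▸ Submodule.mem_span_singleton_self a)
    refine Ideal.span_le.2 fun x hx => ?_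
    obtain ⟨d, _, rfl⟩ := mem_coeffs_iff.1 hx
    exact mem_map_C_iff.1 hr d
  have hdvd : C a ∣ r := (C_dvd_iff_dvd_coeff _ _).2 fun d => by
    by_cases hd : coeff d r = 0
    · simp [hd]
    · have : coeff d r ∈ Ideal.span (r.coeffs : Set V) :=
        Ideal.subset_span (mem_coeffs_iff.2 ⟨d, mem_support_iff.2 hd, rfl⟩)
      rw [ha] at this
      exact Ideal.mem_span_singleton.1 this
  obtain ⟨r', rfl⟩ := hdvd
  exact ⟨a, haI, r', (smul_eq_C_mul _ _).symm⟩

lemma IsSaturated.mem_smul {I : Ideal V} {W : Submodule V (MvPolynomial σ V)}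
    (hW : IsSaturated W) {r : MvPolynomial σ V} (hrW : r ∈ W) (hr : r ∈ I.map C) : r ∈ I • W := by
  obtain ⟨a, ha, r', rfl⟩ := exists_eq_smul_of_mem_map_C hr
  obtain rfl | ha0 := eq_or_ne a 0
  · rw [zero_smul]
    exact zero_mem _
  · exact Submodule.smul_mem_smul ha (hW a ha0 r' hrW)

/-- Nakayama's lemma: as `W` is saturated, its elements divisible by the maximal ideal `𝔪` lie in
`𝔪 • W`. -/
lemma IsSaturated.le_of_forall_exists_sub_mem {W N : Submodule V (MvPolynomial σ V)}
    (hW : IsSaturated W) (hfg : W.FG) (hNW : N ≤ W)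
    (h : ∀ p ∈ W, ∃ q ∈ N, p - q ∈ (IsLocalRing.maximalIdeal V).map C) : W ≤ N := by
  refine Submodule.le_of_le_smul_of_le_jacobson_bot hfg
    (IsLocalRing.jacobson_eq_maximalIdeal ⊥ bot_ne_top).ge fun p hp => ?_
  obtain ⟨q, hq, hpq⟩ := h p hp
  rw [← add_sub_cancel q p]
  exact Submodule.add_mem_sup hq (hW.mem_smul (sub_mem hp (hNW hq)) hpq)

end Saturated

section Homogeneous

open MvPolynomial

attribute [local instance] MvPolynomial.gradedAlgebra

variable {V σ : Type*} [CommRing V] [Finite σ]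

lemma exists_fg_isHomogeneous_le_sup [IsLocalRing V] {J : Ideal (MvPolynomial σ V)}
    (hJ : J.IsHomogeneous (homogeneousSubmodule σ V)) :
    ∃ J₁ ≤ J, J₁.FG ∧ J₁.IsHomogeneous (homogeneousSubmodule σ V) ∧
      J ≤ J₁ ⊔ (IsLocalRing.maximalIdeal V).map C := by
  classical
  obtain ⟨T, rfl⟩ := (Ideal.IsHomogeneous.iff_exists _ _).1 hJ
  let π : MvPolynomial σ V →+* MvPolynomial σ (IsLocalRing.ResidueField V) :=
    map (IsLocalRing.residue V)
  have hπ : Function.Surjective π := map_surjective _ IsLocalRing.residue_surjective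
  have hfg : (Ideal.span (π '' ((↑) '' T))).FG := IsNoetherian.noetherian _
  obtain ⟨s', hs', hs⟩ := (Submodule.fg_span_iff_fg_span_finset_subset _).1 hfg
  obtain ⟨s, hsT, rfl⟩ := Finset.subset_set_image_iff.1 hs'
  refine ⟨Ideal.span s, Ideal.span_mono hsT, ⟨s, rfl⟩,
    Ideal.homogeneous_span _ _ fun x hx => ?_, ?_⟩
  · obtain ⟨y, -, rfl⟩ := hsT hx
    exact y.2
  · have hmap : (Ideal.span ((↑) '' T)).map π =
        (Ideal.span (s : Set (MvPolynomial σ V))).map π := by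
      rw [Ideal.map_span, Ideal.map_span, ← Finset.coe_image]
      exact hs
    have hker : RingHom.ker π = (IsLocalRing.maximalIdeal V).map C := by
      rw [ker_map, IsLocalRing.ker_residue]
    rw [← hker, ← Ideal.comap_map_of_surjective' π hπ, ← hmap]
    exact Ideal.le_comap_map

variable [IsDomain V] [ValuationRing V]

lemma fg_of_isSaturated_of_isHomogeneous {J : Ideal (MvPolynomial σ V)}
    (hJ : IsSaturated (J.restrictScalars V))
    (hhom : J.IsHomogeneous (homogeneousSubmodule σ V)) : J.FG := by
  obtain ⟨J₁, hJ₁J, hfg, hJ₁, hle⟩ := exists_fg_isHomogeneous_le_sup hhom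
  suffices J ≤ J₁ by rwa [le_antisymm this hJ₁J]
  have key : ∀ d, J.restrictScalars V ⊓ homogeneousSubmodule σ V d ≤
      J₁.restrictScalars V ⊓ homogeneousSubmodule σ V d := by
    intro d
    have hsat := hJ.inf (isSaturated_homogeneousSubmodule (σ := σ) (V := V) d)
    refine hsat.le_of_forall_exists_sub_mem
      (hsat.fg_of_le (homogeneousSubmodule_fg σ V d) inf_le_right)
      (inf_le_inf_right _ hJ₁J) ?_
    rintro p ⟨hpJ, hpd⟩
    obtain ⟨q, hq, r, hr, rfl⟩ := Submodule.mem_sup.1 (hle hpJ)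
    refine ⟨homogeneousComponent d q,
      ⟨homogeneousComponent_mem_of_mem hJ₁ hq d, homogeneousComponent_mem d q⟩, ?_⟩
    have hsub : q + r - homogeneousComponent d q = homogeneousComponent d r := by
      rw [sub_eq_iff_eq_add', ← map_add, homogeneousComponent_of_mem hpd, if_pos rfl]
    refine mem_map_C_iff.2 fun e => ?_
    rw [hsub, coeff_homogeneousComponent]
    split_ifs
    · exact mem_map_C_iff.1 hr e
    · exact zero_mem _
  intro p hp
  rw [← sum_homogeneousComponent p]
  exact Ideal.sum_mem _ fun d _ =>
    (key d ⟨homogeneousComponent_mem_of_mem hhom hp d, homogeneousComponent_mem d p⟩).1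

end Homogeneous

section Homogenization

open MvPolynomial

section

variable (σ R : Type*) [CommRing R]

/-- Inverse homogenization: the algebra map `R[σ, X none] → R[σ][T]` sending `X none` to `T` and
`X (some i)` to `X i * T`. It turns the grading by degree into the grading by powers of `T`. -/
noncomputable def scaleHom : MvPolynomial (Option σ) R →ₐ[R] Polynomial (MvPolynomial σ R) :=
  aeval fun i => Polynomial.C (i.elim 1 X) * Polynomial.X

variable {σ R}

lemma scaleHom_X_none : scaleHom σ R (X none) = Polynomial.X := by simp [scaleHom]

lemma scaleHom_X_some (i : σ) :
    scaleHom σ R (X (some i)) = Polynomial.C (X i) * Polynomial.X := by simp [scaleHom]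

lemma exists_scaleHom_monomial_eq (s : Option σ →₀ ℕ) (a : R) :
    ∃ t, scaleHom σ R (monomial s a) = Polynomial.monomial s.degree t := by
  refine ⟨C a * s.prod fun i k => (i.elim 1 X) ^ k, ?_⟩
  rw [scaleHom, aeval_monomial, ← Polynomial.C_mul_X_pow_eq_monomial]
  simp only [mul_pow]
  rw [Finsupp.prod_mul, Finsupp.degree_apply, map_mul, mul_assoc]
  congr 2
  · simp [Finsupp.prod, map_prod, map_pow]
  · simp [Finsupp.prod, Finset.prod_pow_eq_pow_sum]

lemma scaleHom_homogeneousComponent (d : ℕ) (p : MvPolynomial (Option σ) R) :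
    scaleHom σ R (homogeneousComponent d p) =
      Polynomial.monomial d ((scaleHom σ R p).coeff d) := by
  induction p using MvPolynomial.induction_on' with
  | monomial s a =>
    obtain ⟨t, ht⟩ := exists_scaleHom_monomial_eq s a
    rw [homogeneousComponent_of_mem (n := s.degree)
      ((mem_homogeneousSubmodule _ _).2 (isHomogeneous_monomial a rfl))]
    split_ifs with h
    · subst h; simp [ht]
    · simp [ht, Polynomial.coeff_monomial, Ne.symm h]
  | add p q hp hq => simp [hp, hq]

lemma eval_one_scaleHom (p : MvPolynomial (Option σ) R) :
    Polynomial.eval 1 (scaleHom σ R p) = aeval (fun i : Option σ => i.elim 1 X) p := by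
  suffices (Polynomial.evalRingHom (1 : MvPolynomial σ R)).comp (scaleHom σ R).toRingHom =
      (aeval (R := R) fun i : Option σ => i.elim (1 : MvPolynomial σ R) X).toRingHom from
    congrArg (fun f => f p) this
  ext <;> simp [scaleHom, algebraMap_eq]

lemma exists_scaleHom_eq (p : MvPolynomial σ R) :
    ∃ P N, scaleHom σ R P = Polynomial.C p * Polynomial.X ^ N := by
  induction p using MvPolynomial.induction_on with
  | C a => exact ⟨C a, 0, by simp [scaleHom, algebraMap_eq]⟩
  | add p q hp hq =>
    obtain ⟨P, N, hP⟩ := hp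
    obtain ⟨Q, M, hQ⟩ := hq
    refine ⟨P * X none ^ M + Q * X none ^ N, N + M, ?_⟩
    simp only [map_add, map_mul, map_pow, scaleHom_X_none, hP, hQ]
    ring
  | mul_X p i hp =>
    obtain ⟨P, N, hP⟩ := hp
    refine ⟨P * X (some i), N + 1, ?_⟩
    simp only [map_mul, scaleHom_X_some, hP]
    ring

/-- The homogenization of an ideal `J`, with homogenizing variable `X none`. -/
noncomputable def homogenization (J : Ideal (MvPolynomial σ R)) :
    Ideal (MvPolynomial (Option σ) R) :=
  (J.map Polynomial.C).comap (scaleHom σ R)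

lemma mem_homogenization_iff {J : Ideal (MvPolynomial σ R)} {p : MvPolynomial (Option σ) R} :
    p ∈ homogenization J ↔ ∀ k, (scaleHom σ R p).coeff k ∈ J :=
  Ideal.mem_map_C_iff

attribute [local instance] MvPolynomial.gradedAlgebra in
lemma isHomogeneous_homogenization (J : Ideal (MvPolynomial σ R)) :
    (homogenization J).IsHomogeneous (homogeneousSubmodule (Option σ) R) := by
  intro d p hp
  refine mem_homogenization_iff.2 fun k => ?_
  rw [← DirectSum.Decomposition.decompose'_eq, decomposition.decompose'_apply]
  rw [scaleHom_homogeneousComponent, Polynomial.coeff_monomial]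
  split_ifs
  · exact mem_homogenization_iff.1 hp d
  · exact zero_mem _

lemma map_aeval_homogenization (J : Ideal (MvPolynomial σ R)) :
    (homogenization J).map (aeval (R := R) fun i : Option σ => i.elim 1 X) = J := by
  refine le_antisymm (Ideal.map_le_iff_le_comap.2 fun p hp => ?_) fun p hp => ?_
  · rw [Ideal.mem_comap, ← eval_one_scaleHom, Polynomial.eval_eq_sum]
    exact Ideal.sum_mem _ fun k _ => Ideal.mul_mem_right _ _ (mem_homogenization_iff.1 hp k)
  · obtain ⟨P, N, hP⟩ := exists_scaleHom_eq p
    have hPp : aeval (fun i : Option σ => i.elim 1 X) P = p := by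
      rw [← eval_one_scaleHom, hP]
      simp
    rw [← hPp]
    refine Ideal.mem_map_of_mem _ (mem_homogenization_iff.2 fun k => ?_)
    rw [hP, Polynomial.coeff_C_mul]
    exact Ideal.mul_mem_right _ _ hp

lemma IsSaturated.homogenization {J : Ideal (MvPolynomial σ R)}
    (hJ : IsSaturated (J.restrictScalars R)) :
    IsSaturated ((homogenization J).restrictScalars R) := by
  intro c hc p hp
  refine mem_homogenization_iff.2 fun k => hJ c hc _ ?_
  have := mem_homogenization_iff.1 hp k
  rwa [map_smul, Polynomial.coeff_smul] at this

end

/-- Homogenizing `J` reduces this to homogeneous ideals, whose graded pieces are finite over `V`, so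
that Nakayama's lemma applies to them. -/
theorem fg_of_isSaturated {V σ : Type*} [CommRing V] [IsDomain V] [ValuationRing V] [Finite σ]
    {J : Ideal (MvPolynomial σ V)} (hJ : IsSaturated (J.restrictScalars V)) : J.FG := by
  rw [← map_aeval_homogenization J]
  exact (fg_of_isSaturated_of_isHomogeneous hJ.homogenization
    (isHomogeneous_homogenization J)).map _

end Homogenization

section Denominators

open MvPolynomial

variable {V σ : Type*} [CommRing V]

lemma IsSaturated.colon_singleton {J : Ideal (MvPolynomial σ V)}
    (hJ : IsSaturated (J.restrictScalars V)) (u : MvPolynomial σ V) :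
    IsSaturated ((J.colon {u}).restrictScalars V) := by
  intro c hc g hg
  have := Submodule.mem_colon_singleton.1 hg
  exact Submodule.mem_colon_singleton.2 (hJ c hc _ (by rwa [← smul_assoc]))

variable [IsDomain V]

/-- The `V`-saturation of an ideal `P`: the elements having a nonzero constant multiple in `P`. -/
def saturation (P : Ideal (MvPolynomial σ V)) : Ideal (MvPolynomial σ V) where
  carrier := {g | ∃ c : V, c ≠ 0 ∧ C c * g ∈ P}
  zero_mem' := ⟨1, one_ne_zero, by simp⟩
  add_mem' := by
    rintro a b ⟨c, hc, ha⟩ ⟨d, hd, hb⟩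
    refine ⟨c * d, mul_ne_zero hc hd, ?_⟩
    have hadd : C (c * d) * (a + b) = C d * (C c * a) + C c * (C d * b) := by
      rw [map_mul]
      ring
    rw [hadd]
    exact add_mem (P.mul_mem_left _ ha) (P.mul_mem_left _ hb)
  smul_mem' := by
    rintro a b ⟨c, hc, hb⟩
    exact ⟨c, hc, by rw [smul_eq_mul, mul_left_comm]; exact P.mul_mem_left a hb⟩

lemma le_saturation (P : Ideal (MvPolynomial σ V)) : P ≤ saturation P :=
  fun g hg => ⟨1, one_ne_zero, by rwa [map_one, one_mul]⟩

lemma isSaturated_saturation (P : Ideal (MvPolynomial σ V)) :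
    IsSaturated ((saturation P).restrictScalars V) := by
  rintro c hc g ⟨d, hd, hg⟩
  exact ⟨d * c, mul_ne_zero hd hc, by rwa [map_mul, mul_assoc, ← smul_eq_C_mul g]⟩

variable [ValuationRing V] [Finite σ] {I : Ideal V}

lemma IsSaturated.exists_mul_mem {J P : Ideal (MvPolynomial σ V)}
    (hJ : IsSaturated (J.restrictScalars V)) (hPJ : P ≤ J) (h : J ≤ I.map C ⊔ P) :
    ∃ s, s - 1 ∈ I.map C ∧ ∀ g ∈ J, s * g ∈ P := by
  obtain ⟨s, hs, hsP⟩ := Submodule.exists_sub_one_mem_and_smul_le_of_fg_of_le_sup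
    (I := I.map C) (N := P) (fg_of_isSaturated hJ) le_rfl fun g hg => by
      obtain ⟨r, hr, q, hq, rfl⟩ := Submodule.mem_sup.1 (h hg)
      rw [add_comm] at hg ⊢
      obtain ⟨a, ha, r', rfl⟩ := exists_eq_smul_of_mem_map_C hr
      refine Submodule.add_mem_sup hq ?_
      obtain rfl | ha0 := eq_or_ne a 0
      · rw [zero_smul]
        exact zero_mem _
      · have hr' : r' ∈ J := hJ a ha0 r' (by simpa using sub_mem hg (hPJ hq))
        rw [smul_eq_C_mul]
        exact Submodule.smul_mem_smul (Ideal.mem_map_of_mem _ ha) hr'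
  exact ⟨s, hs, fun g hg => hsP ⟨g, hg, rfl⟩⟩

/-- The colon ideals measuring the failure are saturated, hence finitely generated, and agree with
the ideals generated by the `F i` modulo the maximal ideal. -/
lemma exists_denominator {n : ℕ} {F : Fin n → MvPolynomial (Fin n) V}
    {f : Fin n → Polynomial V} (hf : ∀ i, (f i).Monic)
    (hF : ∀ i, F i - Polynomial.aeval (X i) (f i) ∈ (IsLocalRing.maximalIdeal V).map C) :
    ∃ s : MvPolynomial (Fin n) V, s - 1 ∈ (IsLocalRing.maximalIdeal V).map C ∧
      (∀ j g, g * F j ∈ Ideal.span (F '' Set.Iio j) → s * g ∈ Ideal.span (F '' Set.Iio j)) ∧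
      ∀ g ∈ saturation (Ideal.span (Set.range F)), s * g ∈ Ideal.span (Set.range F) := by
  have hsat : ∀ S : Finset (Fin n), saturation (Ideal.span (F '' S)) ≤
      relIdeal F S (IsLocalRing.maximalIdeal V) := fun S g ⟨c, hc, hg⟩ =>
    mem_relIdeal_maximalIdeal_of_C_mul_mem hf hF hc S hg
  have hcolon : ∀ j : Fin n, ∃ s : MvPolynomial (Fin n) V,
      s - 1 ∈ (IsLocalRing.maximalIdeal V).map C ∧
      ∀ g ∈ (saturation (Ideal.span (F '' Set.Iio j))).colon {F j},
        s * g ∈ Ideal.span (F '' Set.Iio j) := fun j =>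
    ((isSaturated_saturation _).colon_singleton (F j)).exists_mul_mem
      (fun g hg => Submodule.mem_colon_singleton.2
        (le_saturation _ (Ideal.mul_mem_right _ _ hg))) fun g hg => by
        rw [← Finset.coe_Iio] at hg ⊢
        exact isRegularModulo_of_monic hf hF (Finset.Iio j) j (by simp) g
          (hsat _ (Submodule.mem_colon_singleton.1 hg))
  choose s hs hsF using hcolon
  obtain ⟨t, ht, htF⟩ := (isSaturated_saturation (Ideal.span (Set.range F))).exists_mul_mem
    (le_saturation _) (by rw [← Set.image_univ, ← Finset.coe_univ]; exact hsat Finset.univ)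
  refine ⟨t * ∏ j, s j, ?_, fun j g hg => ?_, fun g hg => ?_⟩
  · simp only [← Ideal.Quotient.eq, map_mul, map_prod, map_one] at ht hs ⊢
    simp [ht, hs]
  · obtain ⟨a, ha⟩ := (Finset.dvd_prod_of_mem s (Finset.mem_univ j)).mul_left t
    rw [ha, mul_assoc, mul_left_comm]
    exact Ideal.mul_mem_left _ a
      (hsF j g (Submodule.mem_colon_singleton.2 (le_saturation _ hg)))
  · rw [mul_right_comm]
    exact Ideal.mul_mem_right _ _ (htF g hg)

end Denominators

section CompleteIntersection

lemma isRegular_ofFn {R : Type*} [CommRing R] {r : ℕ} (f : Fin r → R)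
    (hreg : ∀ i g, g * f i ∈ Ideal.span (f '' Set.Iio i) → g ∈ Ideal.span (f '' Set.Iio i))
    (htop : Ideal.span (Set.range f) ≠ ⊤) : RingTheory.Sequence.IsRegular R (List.ofFn f) := by
  refine ⟨⟨fun i hi => ?_⟩, fun h => htop ?_⟩
  · rw [isSMulRegular_quotient_iff_mem_of_smul_mem]
    rw [List.length_ofFn] at hi
    have htake : Ideal.ofList (List.take i (List.ofFn f)) =
        Ideal.span (f '' Set.Iio (⟨i, hi⟩ : Fin r)) := by
      refine congrArg Ideal.span (Set.ext fun x => ?_)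
      change x ∈ List.take i (List.ofFn f) ↔ _
      simp only [List.mem_take_iff_getElem, List.getElem_ofFn, List.length_ofFn, Set.mem_image,
        Set.mem_Iio]
      constructor
      · rintro ⟨k, hk, rfl⟩
        exact ⟨⟨k, by lia⟩, by simp [Fin.lt_def]; lia, rfl⟩
      · rintro ⟨k, hk, rfl⟩
        exact ⟨k, lt_min hk k.2, rfl⟩
    simp only [htake, smul_eq_mul, Ideal.mul_top, List.getElem_ofFn]
    intro x hx
    rw [mul_comm] at hx
    exact hreg _ x hx
  · rw [smul_eq_mul, Ideal.mul_top] at h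
    rw [h]
    refine congrArg Ideal.span (Set.ext fun x => ?_)
    change _ ↔ x ∈ List.ofFn f
    simp only [Set.mem_range, List.mem_ofFn]

section Localization

variable {A B L : Type*} [CommRing A] [CommRing B] [CommRing L] [Algebra A L] {s : A}
  [IsLocalization.Away s L] {P : Ideal A}

lemma mem_map_algebraMap_of_mul_mem {x : L} {a : A} {N M : ℕ}
    (hx : x * algebraMap A L s ^ N = algebraMap A L a) (ha : s ^ M * a ∈ P) :
    x ∈ P.map (algebraMap A L) := by
  rw [IsLocalization.mem_map_algebraMap_iff (Submonoid.powers s)]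
  refine ⟨⟨⟨s ^ M * a, ha⟩, s ^ M * s ^ N, mul_mem ⟨M, rfl⟩ ⟨N, rfl⟩⟩, ?_⟩
  simp only [map_mul, map_pow, ← hx]
  ring

lemma mem_map_algebraMap_of_mul_algebraMap_mem {u : A} (hu : ∀ g, g * u ∈ P → s * g ∈ P) {x : L}
    (hx : x * algebraMap A L u ∈ P.map (algebraMap A L)) : x ∈ P.map (algebraMap A L) := by
  obtain ⟨N, a, ha⟩ := IsLocalization.Away.surj s x
  have hau : algebraMap A L (a * u) ∈ P.map (algebraMap A L) := by
    rw [map_mul, ← ha, mul_right_comm]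
    exact Ideal.mul_mem_right _ _ hx
  obtain ⟨_, ⟨M, rfl⟩, hM⟩ :=
    (IsLocalization.algebraMap_mem_map_algebraMap_iff (Submonoid.powers s) L P _).1 hau
  refine mem_map_algebraMap_of_mul_mem ha (M := M + 1) ?_
  rw [pow_succ', mul_assoc]
  exact hu _ (by rwa [mul_assoc])

lemma mem_map_algebraMap_of_map_eq_zero (φ : L →+* B)
    (hφ : ∀ a, φ (algebraMap A L a) = 0 → s * a ∈ P) {x : L} (hx : φ x = 0) :
    x ∈ P.map (algebraMap A L) := by
  obtain ⟨N, a, ha⟩ := IsLocalization.Away.surj s x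
  refine mem_map_algebraMap_of_mul_mem ha (M := 1) ?_
  rw [pow_one]
  exact hφ a (by rw [← ha, map_mul, hx, zero_mul])

end Localization

open MvPolynomial

section Rabinowitsch

variable {R : Type*} [CommRing R] {n r : ℕ} (s : MvPolynomial (Fin n) R)
  (F : Fin r → MvPolynomial (Fin n) R)

/-- The equations `F`, preceded by the equation `s * X 0 = 1` for a new variable `X 0`: they define
the locus of `F` with `s` inverted. -/
noncomputable def rabinowitsch : Fin (r + 1) → MvPolynomial (Fin (n + 1)) R :=
  Fin.cons (rename Fin.succ s * X 0 - 1) fun i => rename Fin.succ (F i)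

/-- The surjection `R[X 0, …, X n] → R[X 1, …, X n][1 / s]` sending `X 0` to `1 / s`. -/
noncomputable def toAway : MvPolynomial (Fin (n + 1)) R →+*
    AdjoinRoot (Polynomial.C s * Polynomial.X - 1) :=
  (AdjoinRoot.mk _).comp (finSuccEquiv R n).toRingEquiv.toRingHom

lemma finSuccEquiv_rename_succ (p : MvPolynomial (Fin n) R) :
    finSuccEquiv R n (rename Fin.succ p) = Polynomial.C p := by
  induction p using MvPolynomial.induction_on with
  | C a => simp [finSuccEquiv_apply]
  | add p q hp hq => simp [hp, hq]
  | mul_X p i hp => rw [map_mul, map_mul, hp, rename_X, finSuccEquiv_X_succ, map_mul]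

lemma toAway_rename_succ (p : MvPolynomial (Fin n) R) :
    toAway s (rename Fin.succ p) = algebraMap _ _ p :=
  congrArg (AdjoinRoot.mk _) (finSuccEquiv_rename_succ p)

lemma toAway_surjective : Function.Surjective (toAway s) :=
  AdjoinRoot.mk_surjective.comp (finSuccEquiv R n).surjective

lemma ker_toAway : RingHom.ker (toAway s) = Ideal.span {rename Fin.succ s * X 0 - 1} := by
  have hsymm : (finSuccEquiv R n).toRingEquiv.symm (Polynomial.C s * Polynomial.X - 1) =
      rename Fin.succ s * X 0 - 1 := by
    rw [RingEquiv.symm_apply_eq]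
    simp [finSuccEquiv_rename_succ, finSuccEquiv_X_zero]
  have hker : RingHom.ker (AdjoinRoot.mk (Polynomial.C s * Polynomial.X - 1)) =
      Ideal.span {Polynomial.C s * Polynomial.X - 1} := Ideal.mk_ker
  have hmap := Ideal.map_symm (I := Ideal.span {Polynomial.C s * Polynomial.X - 1})
    (finSuccEquiv R n).toRingEquiv
  rw [toAway, ← RingHom.comap_ker, hker, ← hsymm]
  rw [Ideal.map_span, Set.image_singleton] at hmap
  exact hmap.symm

lemma mem_span_rabinowitsch_image_iff {S : Set (Fin r)} {p : MvPolynomial (Fin (n + 1)) R} :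
    p ∈ Ideal.span (rabinowitsch s F '' insert 0 (Fin.succ '' S)) ↔
      toAway s p ∈ (Ideal.span (F '' S)).map (algebraMap _ _) := by
  have himage : rabinowitsch s F '' (Fin.succ '' S) = rename Fin.succ '' (F '' S) := by
    rw [Set.image_image, Set.image_image]
    rfl
  have hmap : (Ideal.span (F '' S)).map (algebraMap _ _) =
      (Ideal.span (rename Fin.succ '' (F '' S))).map (toAway s) := by
    simp only [Ideal.map_span, Set.image_image, toAway_rename_succ]
  rw [hmap, ← Ideal.mem_comap, Ideal.comap_map_of_surjective' _ (toAway_surjective s), ker_toAway,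
    Set.image_insert_eq, Ideal.span_insert, himage, sup_comm]
  rfl

lemma mem_span_range_rabinowitsch_iff {p : MvPolynomial (Fin (n + 1)) R} :
    p ∈ Ideal.span (Set.range (rabinowitsch s F)) ↔
      toAway s p ∈ (Ideal.span (Set.range F)).map (algebraMap _ _) := by
  have huniv : insert 0 (Fin.succ '' Set.univ) = (Set.univ : Set (Fin (r + 1))) := by
    ext i
    cases i using Fin.cases <;> simp
  rw [← Set.image_univ, ← Set.image_univ, ← mem_span_rabinowitsch_image_iff, huniv]

lemma isRegular_rabinowitsch
    (hreg : ∀ j g, g * F j ∈ Ideal.span (F '' Set.Iio j) → s * g ∈ Ideal.span (F '' Set.Iio j))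
    (htop : Ideal.span (Set.range (rabinowitsch s F)) ≠ ⊤) :
    RingTheory.Sequence.IsRegular (MvPolynomial (Fin (n + 1)) R)
      (List.ofFn (rabinowitsch s F)) := by
  have : IsLocalization.Away s (AdjoinRoot (Polynomial.C s * Polynomial.X - 1)) :=
    IsLocalization.adjoin_inv s
  refine isRegular_ofFn _ (fun i p hp => ?_) htop
  cases i using Fin.cases with
  | zero =>
    have hIio : Set.Iio (0 : Fin (r + 1)) = ∅ := by simp
    rw [hIio, Set.image_empty, Ideal.span_empty, Ideal.mem_bot] at hp ⊢
    have hregular : Polynomial.C s * Polynomial.X - 1 ∈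
        nonZeroDivisors (Polynomial (MvPolynomial (Fin n) R)) :=
      Polynomial.mem_nonzeroDivisors_of_coeff_mem 0 (by simp [IsUnit.mem_nonZeroDivisors])
    refine (finSuccEquiv R n).injective ?_
    rw [map_zero]
    refine (mul_right_mem_nonZeroDivisors_eq_zero_iff hregular).1 ?_
    simpa [rabinowitsch, finSuccEquiv_rename_succ, finSuccEquiv_X_zero] using
      congrArg (finSuccEquiv R n) hp
  | succ j =>
    have hIio : Set.Iio j.succ = insert 0 (Fin.succ '' Set.Iio j) := by
      ext k
      cases k using Fin.cases <;> simp
    rw [hIio, mem_span_rabinowitsch_image_iff] at hp ⊢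
    refine mem_map_algebraMap_of_mul_algebraMap_mem (hreg j) ?_
    rwa [map_mul, rabinowitsch, Fin.cons_succ, toAway_rename_succ] at hp

variable {s F} {B : Type*} [CommRing B] [Algebra R B] {y : Fin n → B} {u : B}

lemma ker_aeval_cons_eq_span_range (hu : aeval y s * u = 1) (hy : ∀ i, aeval y (F i) = 0)
    (hker : ∀ g, aeval y g = 0 → s * g ∈ Ideal.span (Set.range F)) :
    RingHom.ker (aeval (R := R) (Fin.cons u y : Fin (n + 1) → B)) =
      Ideal.span (Set.range (rabinowitsch s F)) := by
  have : IsLocalization.Away s (AdjoinRoot (Polynomial.C s * Polynomial.X - 1)) :=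
    IsLocalization.adjoin_inv s
  have hrename : ∀ p, aeval (R := R) (Fin.cons u y : Fin (n + 1) → B) (rename Fin.succ p) =
      aeval y p := fun p => by rw [aeval_rename]; rfl
  refine le_antisymm (fun p hp => ?_) (Ideal.span_le.2 ?_)
  · let φ := AdjoinRoot.lift (f := Polynomial.C s * Polynomial.X - 1)
      (aeval (R := R) y).toRingHom u (by simp [hu])
    have hφ : φ.comp (toAway s) = (aeval (R := R) (Fin.cons u y : Fin (n + 1) → B)).toRingHom := by
      ext i
      · simp [φ, toAway, finSuccEquiv_apply]
      · cases i using Fin.cases <;> simp [φ, toAway, finSuccEquiv_apply]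
    rw [mem_span_range_rabinowitsch_iff]
    refine mem_map_algebraMap_of_map_eq_zero φ (fun a ha => hker a ?_) ?_
    · simpa [φ] using ha
    · exact (RingHom.congr_fun hφ p).trans hp
  · rintro _ ⟨i, rfl⟩
    cases i using Fin.cases with
    | zero => simp [rabinowitsch, hrename, hu]
    | succ i => simpa [rabinowitsch, hrename] using hy i

end Rabinowitsch

variable {R A : Type*} [CommRing R] [CommRing A] [Algebra R A] {n r : ℕ}

lemma isCompleteIntersectionOfFiniteType_range (φ : MvPolynomial (Fin n) R →ₐ[R] A)
    {g : Fin r → MvPolynomial (Fin n) R}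
    (hg : RingTheory.Sequence.IsRegular (MvPolynomial (Fin n) R) (List.ofFn g))
    (hker : RingHom.ker φ = Ideal.span (Set.range g)) :
    Algebra.IsCompleteIntersectionOfFiniteType R φ.range := by
  refine ⟨n, r, g, hg, ?_⟩
  rw [← hker, ← φ.ker_rangeRestrict]
  exact ⟨Ideal.quotientKerAlgEquivOfSurjective φ.rangeRestrict_surjective⟩

lemma isCompleteIntersectionOfFiniteType_range_aeval_cons [Nontrivial A]
    {F : Fin r → MvPolynomial (Fin n) R} {s : MvPolynomial (Fin n) R} {y : Fin n → A} {u : A}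
    (hu : aeval y s * u = 1) (hy : ∀ i, aeval y (F i) = 0)
    (hreg : ∀ j g, g * F j ∈ Ideal.span (F '' Set.Iio j) → s * g ∈ Ideal.span (F '' Set.Iio j))
    (hker : ∀ g, aeval y g = 0 → s * g ∈ Ideal.span (Set.range F)) :
    Algebra.IsCompleteIntersectionOfFiniteType R
      (aeval (R := R) (Fin.cons u y : Fin (n + 1) → A)).range := by
  have hspan := ker_aeval_cons_eq_span_range hu hy hker
  refine isCompleteIntersectionOfFiniteType_range _ (isRegular_rabinowitsch s F hreg ?_) hspan
  rw [← hspan]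
  exact RingHom.ker_ne_top _

theorem exists_completeIntersection_subalgebra {V V' : Type*} [CommRing V] [IsDomain V]
    [ValuationRing V] [CommRing V'] [IsLocalRing V'] [Algebra V V'] {n : ℕ}
    {F : Fin n → MvPolynomial (Fin n) V} {f : Fin n → Polynomial V} {y : Fin n → V'}
    (hf : ∀ i, (f i).Monic)
    (hF : ∀ i, F i - Polynomial.aeval (X i) (f i) ∈ (IsLocalRing.maximalIdeal V).map C)
    (hm : (IsLocalRing.maximalIdeal V).map (algebraMap V V') ≤ IsLocalRing.maximalIdeal V')
    (hy : ∀ i, aeval y (F i) = 0)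
    (hker : ∀ p, aeval y p = 0 → p ∈ saturation (Ideal.span (Set.range F))) :
    ∃ B : Subalgebra V V', Algebra.IsCompleteIntersectionOfFiniteType V B ∧ ∀ i, y i ∈ B := by
  obtain ⟨s, hs, hsreg, hsker⟩ := exists_denominator hf hF
  have hsy : aeval y s - 1 ∈ IsLocalRing.maximalIdeal V' := by
    have hle : (IsLocalRing.maximalIdeal V).map C ≤
        (IsLocalRing.maximalIdeal V').comap (aeval (R := V) y) :=
      Ideal.map_le_iff_le_comap.2 fun a ha => by
        simpa using hm (Ideal.mem_map_of_mem _ ha)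
    simpa using hle hs
  have hunit : IsUnit (aeval y s) :=
    IsLocalRing.isUnit_of_mem_nonunits_one_sub_self _
      (by rw [← neg_sub]; exact neg_mem hsy)
  obtain ⟨u, hu⟩ := hunit.exists_right_inv
  exact ⟨_, isCompleteIntersectionOfFiniteType_range_aeval_cons hu hy hsreg
    fun g hg => hsker g (hker g hg), fun i => ⟨X i.succ, by simp⟩⟩

end CompleteIntersection

section GaussNorm

open MvPolynomial

variable {K Γ₀ σ τ : Type*} [Field K] [LinearOrderedCommGroupWithZero Γ₀]

section Aeval

variable {R B : Type*} [CommRing R] [CommRing B] [Algebra R B] {p : MvPolynomial σ R} {x : σ → B}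
  {A : Subring B}

lemma aeval_mem_addSubgroup {J : AddSubgroup B} (hJ : ∀ a ∈ J, ∀ b ∈ A, a * b ∈ J)
    (hp : ∀ d, algebraMap R B (coeff d p) ∈ J) (hx : ∀ i, x i ∈ A) : aeval x p ∈ J := by
  rw [aeval_def, eval₂_eq]
  exact sum_mem fun d _ => hJ _ (hp d) _ (A.prod_mem fun i _ => A.pow_mem (hx i) _)

lemma aeval_mem_subring (hp : ∀ d, algebraMap R B (coeff d p) ∈ A) (hx : ∀ i, x i ∈ A) :
    aeval x p ∈ A :=
  aeval_mem_addSubgroup (J := A.toAddSubgroup) (fun _ ha _ hb => A.mul_mem ha hb) hp hx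

end Aeval

/-- The polynomials of Gauss norm at most one. -/
def integralPolynomials (w : Valuation K Γ₀) (σ : Type*) :
    Subring (MvPolynomial σ K) where
  carrier := {p | ∀ d, w (coeff d p) ≤ 1}
  zero_mem' d := by simp
  one_mem' d := by
    classical
    rw [coeff_one]
    split_ifs <;> simp
  add_mem' hp hq d := by rw [coeff_add]; exact w.map_add_le (hp d) (hq d)
  neg_mem' hp d := by rw [coeff_neg, w.map_neg]; exact hp d
  mul_mem' hp hq d := by
    classical
    rw [coeff_mul]
    refine w.map_sum_le fun a _ => ?_
    rw [map_mul]
    exact mul_le_one' (hp _) (hq _)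

/-- The polynomials of Gauss norm less than one. -/
def smallPolynomials (w : Valuation K Γ₀) (σ : Type*) :
    AddSubgroup (MvPolynomial σ K) where
  carrier := {p | ∀ d, w (coeff d p) < 1}
  zero_mem' d := by simp
  add_mem' hp hq d := by rw [coeff_add]; exact w.map_add_lt (hp d) (hq d)
  neg_mem' hp d := by rw [coeff_neg, w.map_neg]; exact hp d

variable {w : Valuation K Γ₀} {p q : MvPolynomial σ K} {a : K}

lemma smallPolynomials_le : smallPolynomials w σ ≤ (integralPolynomials w σ).toAddSubgroup :=
  fun _ hp d => (hp d).le

lemma mul_mem_smallPolynomials (hp : p ∈ smallPolynomials w σ)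
    (hq : q ∈ integralPolynomials w σ) : p * q ∈ smallPolynomials w σ := by
  classical
  intro d
  rw [coeff_mul]
  refine w.map_sum_lt one_ne_zero fun a _ => ?_
  rw [map_mul]
  exact mul_lt_one_of_lt_of_le (hp _) (hq _)

lemma mul_mem_smallPolynomials' (hp : p ∈ integralPolynomials w σ)
    (hq : q ∈ smallPolynomials w σ) : p * q ∈ smallPolynomials w σ := by
  rw [mul_comm]
  exact mul_mem_smallPolynomials hq hp

lemma C_mem_integralPolynomials (ha : w a ≤ 1) : C a ∈ integralPolynomials w σ := by
  classical
  intro d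
  rw [coeff_C]
  split_ifs
  · exact ha
  · simp

lemma C_mem_smallPolynomials (ha : w a < 1) : C a ∈ smallPolynomials w σ := by
  classical
  intro d
  rw [coeff_C]
  split_ifs
  · exact ha
  · simp

lemma monomial_mem_integralPolynomials (d : σ →₀ ℕ) :
    monomial d 1 ∈ integralPolynomials w σ := by
  classical
  intro d'
  rw [coeff_monomial]
  split_ifs <;> simp

lemma X_mem_integralPolynomials (i : σ) : X i ∈ integralPolynomials w σ :=
  monomial_mem_integralPolynomials _

lemma aeval_mem_integralPolynomials (hp : p ∈ integralPolynomials w σ)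
    {x : σ → MvPolynomial τ K} (hx : ∀ i, x i ∈ integralPolynomials w τ) :
    aeval x p ∈ integralPolynomials w τ :=
  aeval_mem_subring (fun d => C_mem_integralPolynomials (hp d)) hx

lemma aeval_mem_smallPolynomials (hp : p ∈ smallPolynomials w σ)
    {x : σ → MvPolynomial τ K} (hx : ∀ i, x i ∈ integralPolynomials w τ) :
    aeval x p ∈ smallPolynomials w τ :=
  aeval_mem_addSubgroup (fun _ ha _ hb => mul_mem_smallPolynomials ha hb)
    (fun d => C_mem_smallPolynomials (hp d)) hx

lemma rename_mem_integralPolynomials (hp : p ∈ integralPolynomials w σ) (k : σ → τ) :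
    rename k p ∈ integralPolynomials w τ := by
  rw [rename_eq_aeval]
  exact aeval_mem_integralPolynomials hp fun i => X_mem_integralPolynomials _

lemma rename_mem_smallPolynomials (hp : p ∈ smallPolynomials w σ) (k : σ → τ) :
    rename k p ∈ smallPolynomials w τ := by
  rw [rename_eq_aeval]
  exact aeval_mem_smallPolynomials hp fun i => X_mem_integralPolynomials _

lemma mem_integralPolynomials_of_sub_mem (h : p - q ∈ smallPolynomials w σ)
    (hq : q ∈ integralPolynomials w σ) : p ∈ integralPolynomials w σ := by
  rw [← sub_add_cancel p q]
  exact add_mem (smallPolynomials_le h) hq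

lemma polynomial_aeval_mem_integralPolynomials {f : Polynomial K} (hf : ∀ k, w (f.coeff k) ≤ 1)
    (hp : p ∈ integralPolynomials w σ) : Polynomial.aeval p f ∈ integralPolynomials w σ := by
  rw [Polynomial.aeval_eq_sum_range]
  refine sum_mem fun k _ => ?_
  rw [smul_eq_C_mul]
  exact mul_mem (C_mem_integralPolynomials (hf k)) (pow_mem hp k)

section AlmostConstant

/-- The polynomials congruent to an integral constant modulo polynomials of Gauss norm less than
one, i.e. those with constant reduction. -/
def almostConstantPolynomials (w : Valuation K Γ₀) (σ : Type*) :
    Subring (MvPolynomial σ K) where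
  carrier := {p | ∃ a, w a ≤ 1 ∧ p - C a ∈ smallPolynomials w σ}
  zero_mem' := ⟨0, by simp, by simp⟩
  one_mem' := ⟨1, by simp, by simp⟩
  add_mem' := by
    rintro p q ⟨a, ha, hpa⟩ ⟨b, hb, hqb⟩
    refine ⟨a + b, w.map_add_le ha hb, ?_⟩
    rw [map_add, add_sub_add_comm]
    exact add_mem hpa hqb
  neg_mem' := by
    rintro p ⟨a, ha, hpa⟩
    refine ⟨-a, by rwa [w.map_neg], ?_⟩
    rw [map_neg, ← neg_sub']
    exact neg_mem hpa
  mul_mem' := by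
    rintro p q ⟨a, ha, hpa⟩ ⟨b, hb, hqb⟩
    refine ⟨a * b, by rw [map_mul]; exact mul_le_one' ha hb, ?_⟩
    have hsplit : p * q - C (a * b) = (p - C a) * q + C a * (q - C b) := by
      rw [map_mul]
      ring
    rw [hsplit]
    exact add_mem (mul_mem_smallPolynomials hpa
      (mem_integralPolynomials_of_sub_mem hqb (C_mem_integralPolynomials hb)))
      (mul_mem_smallPolynomials' (C_mem_integralPolynomials ha) hqb)

lemma C_mem_almostConstantPolynomials (ha : w a ≤ 1) : C a ∈ almostConstantPolynomials w σ :=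
  ⟨a, ha, by rw [sub_self]; exact zero_mem _⟩

lemma smallPolynomials_le_almostConstantPolynomials :
    smallPolynomials w σ ≤ (almostConstantPolynomials w σ).toAddSubgroup :=
  fun p hp => ⟨0, by simp, by simpa using hp⟩

lemma almostConstantPolynomials_le : almostConstantPolynomials w σ ≤ integralPolynomials w σ :=
  fun _ ⟨_, ha, hpa⟩ => mem_integralPolynomials_of_sub_mem hpa (C_mem_integralPolynomials ha)

lemma valuation_coeff_lt_one_of_mem_almostConstantPolynomials
    (hp : p ∈ almostConstantPolynomials w σ) {d : σ →₀ ℕ} (hd : d ≠ 0) : w (coeff d p) < 1 := by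
  classical
  obtain ⟨a, -, hpa⟩ := hp
  simpa [coeff_C, hd.symm] using hpa d

lemma rename_mem_almostConstantPolynomials (hp : p ∈ almostConstantPolynomials w σ) (k : σ → τ) :
    rename k p ∈ almostConstantPolynomials w τ := by
  obtain ⟨a, ha, hpa⟩ := hp
  refine ⟨a, ha, ?_⟩
  rw [← rename_C k, ← map_sub]
  exact rename_mem_smallPolynomials hpa k

lemma aeval_mem_almostConstantPolynomials (hp : p ∈ integralPolynomials w σ)
    {x : σ → MvPolynomial τ K} (hx : ∀ i, x i ∈ almostConstantPolynomials w τ) :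
    aeval x p ∈ almostConstantPolynomials w τ :=
  aeval_mem_subring (fun d => C_mem_almostConstantPolynomials (hp d)) hx

end AlmostConstant

section Eval

variable {M : Type*} [CommRing M] [Algebra K M] {v : Valuation M Γ₀} {y : σ → M}

lemma valuation_aeval_le_one (hvw : ∀ a, v (algebraMap K M a) = w a)
    (hp : p ∈ integralPolynomials w σ) (hy : ∀ i, v (y i) ≤ 1) : v (aeval y p) ≤ 1 :=
  aeval_mem_subring (A := v.integer) (fun d => (hvw _).trans_le (hp d)) hy

lemma valuation_aeval_lt_one (hvw : ∀ a, v (algebraMap K M a) = w a)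
    (hp : p ∈ smallPolynomials w σ) (hy : ∀ i, v (y i) ≤ 1) : v (aeval y p) < 1 :=
  aeval_mem_addSubgroup (A := v.integer) (J := v.ltAddSubgroup 1)
    (fun a ha b hb => by
      rw [Valuation.mem_ltAddSubgroup_iff, Units.val_one] at ha ⊢
      rw [map_mul]
      exact mul_lt_one_of_lt_of_le ha hb)
    (fun d => (hvw _).trans_lt (hp d)) hy

lemma mem_smallPolynomials_of_valuation_aeval_lt_one (hvw : ∀ a, v (algebraMap K M a) = w a)
    (hy : ∀ i, v (y i) ≤ 1) (hp : p ∈ almostConstantPolynomials w σ) (hpy : v (aeval y p) < 1) :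
    p ∈ smallPolynomials w σ := by
  obtain ⟨a, -, hpa⟩ := hp
  have ha : w a < 1 := by
    rw [← hvw, ← sub_sub_cancel (aeval y p) (algebraMap K M a)]
    exact v.map_sub_lt hpy (by simpa using valuation_aeval_lt_one hvw hpa hy)
  rw [← sub_add_cancel p (C a)]
  exact add_mem hpa (C_mem_smallPolynomials ha)

end Eval

end GaussNorm

section MonicPresentations

open MvPolynomial

lemma ker_comp_eq_span {A B C : Type*} [CommRing A] [CommRing B] [CommRing C]
    {Ψ : A →+* B} {g : B →+* C} (hΨ : Function.Surjective Ψ) {s t : Set A}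
    (hs : RingHom.ker g = Ideal.span (Ψ '' s)) (ht : RingHom.ker Ψ = Ideal.span t) :
    RingHom.ker (g.comp Ψ) = Ideal.span (s ∪ t) := by
  rw [← RingHom.comap_ker, hs, ← Ideal.map_span, Ideal.comap_map_of_surjective Ψ hΨ,
    ← RingHom.ker_eq_comap_bot, ht, Ideal.span_union]

lemma finite_range_mvPolynomial_coeff {R σ : Type*} [CommSemiring R] (p : MvPolynomial σ R) :
    (Set.range fun d => coeff d p).Finite := by
  refine ((p.support.finite_toSet.image fun d => coeff d p).insert 0).subset ?_
  rintro _ ⟨d, rfl⟩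
  by_cases hd : d ∈ p.support
  · exact Or.inr ⟨d, hd, rfl⟩
  · exact Or.inl (notMem_support_iff.1 hd)

variable {K M L Γ₀ : Type*} [Field K] [Field M] [Field L] [Algebra K M] [Algebra K L] [Algebra M L]
  [LinearOrderedCommGroupWithZero Γ₀] {w : Valuation K Γ₀} {v : Valuation M Γ₀}
  {u : Valuation L Γ₀}

/-- A presentation of the field extension `M` of `K` by finitely many generators `y i` in the
valuation ring of `v` and as many relations `F i`, whose coefficients lie in the valuation ring of
`w` and whose reductions are the monic polynomials `f i` in the single variable `X i`. -/
structure MonicPresentation (w : Valuation K Γ₀) (v : Valuation M Γ₀) where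
  ι : Type
  finite : Finite ι
  y : ι → M
  F : ι → MvPolynomial ι K
  f : ι → Polynomial K
  y_le : ∀ i, v (y i) ≤ 1
  monic : ∀ i, (f i).Monic
  coeff_le : ∀ i k, w ((f i).coeff k) ≤ 1
  sub_mem : ∀ i, F i - Polynomial.aeval (X i) (f i) ∈ smallPolynomials w ι
  ker_eq : RingHom.ker (aeval (R := K) y).toRingHom = Ideal.span (Set.range F)
  surjective : Function.Surjective (aeval (R := K) y)

/-- `M` has monic presentations over `K` in which the integral elements of any given finite set are
represented by polynomials with constant reduction. -/
def HasMonicPresentations (w : Valuation K Γ₀) (v : Valuation M Γ₀) : Prop :=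
  ∀ E : Set M, E.Finite → ∃ S : MonicPresentation w v, ∀ e ∈ E, v e ≤ 1 →
    ∃ p ∈ almostConstantPolynomials w S.ι, aeval S.y p = e

lemma HasMonicPresentations.of_surjective (hvw : ∀ a, v (algebraMap K M a) = w a)
    (h : Function.Surjective (algebraMap K M)) : HasMonicPresentations w v := by
  have hC (a : K) : aeval (R := K) (Empty.elim : Empty → M) (C a) = algebraMap K M a :=
    aeval_C _ _
  have hker : RingHom.ker (aeval (R := K) (Empty.elim : Empty → M)).toRingHom = ⊥ := by
    refine (RingHom.injective_iff_ker_eq_bot _).1 fun p q hpq => ?_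
    obtain ⟨a, rfl⟩ := C_surjective Empty p
    obtain ⟨b, rfl⟩ := C_surjective Empty q
    rw [(algebraMap K M).injective ((hC a).symm.trans (hpq.trans (hC b)))]
  refine fun E _ => ⟨⟨Empty, inferInstance, Empty.elim, Empty.elim, Empty.elim, by simp, by simp,
    by simp, by simp, by rw [hker, Set.range_eq_empty, Ideal.span_empty], fun m => ?_⟩,
    fun e _ he => ?_⟩
  · obtain ⟨a, rfl⟩ := h m
    exact ⟨C a, hC a⟩
  · obtain ⟨a, rfl⟩ := h e
    exact ⟨C a, C_mem_almostConstantPolynomials (by rwa [hvw] at he), hC a⟩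

section Tower

variable {σ τ : Type*}

/-- Evaluation of the variables indexed by `τ` at `x`, as a map `K[X_σ, X_τ] → M[X_σ]`. -/
noncomputable def evalRight (x : τ → M) : MvPolynomial (σ ⊕ τ) K →ₐ[K] MvPolynomial σ M :=
  aeval (Sum.elim X fun j => C (x j))

lemma evalRight_rename_inr (x : τ → M) (p : MvPolynomial τ K) :
    evalRight (σ := σ) x (rename Sum.inr p) = C (aeval x p) := by
  rw [evalRight, aeval_rename]
  exact aeval_algebraMap_apply (MvPolynomial σ M) x p

lemma evalRight_X_inl (x : τ → M) (i : σ) : evalRight (K := K) x (X (Sum.inl i)) = X i := by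
  rw [evalRight, aeval_X, Sum.elim_inl]

lemma evalRight_eq (x : τ → M) :
    (evalRight (K := K) (σ := σ) x).toRingHom =
      (map (aeval (R := K) x).toRingHom).comp (sumAlgEquiv K σ τ).toRingEquiv.toRingHom := by
  refine ringHom_ext (fun a => ?_) ?_
  · simp [evalRight, MvPolynomial.algebraMap_apply]
  · rintro (i | i) <;> simp [evalRight]

lemma aeval_evalRight [IsScalarTower K M L] (x : τ → M) (y : σ → L)
    (p : MvPolynomial (σ ⊕ τ) K) :
    aeval y (evalRight x p) = aeval (Sum.elim y fun j => algebraMap M L (x j)) p := by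
  have : ((aeval (R := M) y).restrictScalars K).comp (evalRight x) =
      aeval (Sum.elim y fun j => algebraMap M L (x j)) := by
    refine algHom_ext ?_
    rintro (i | i) <;> simp [evalRight]
  exact DFunLike.congr_fun this p

lemma evalRight_surjective {x : τ → M} (hx : Function.Surjective (aeval (R := K) x)) :
    Function.Surjective (evalRight (K := K) (σ := σ) x) := by
  intro p
  induction p using MvPolynomial.induction_on with
  | C a =>
    obtain ⟨q, rfl⟩ := hx a
    exact ⟨_, evalRight_rename_inr x q⟩
  | add p q hp hq =>
    obtain ⟨p, rfl⟩ := hp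
    obtain ⟨q, rfl⟩ := hq
    exact ⟨p + q, map_add _ _ _⟩
  | mul_X p i hp =>
    obtain ⟨p, rfl⟩ := hp
    exact ⟨p * X (Sum.inl i), by rw [map_mul, evalRight_X_inl]⟩

lemma ker_evalRight {x : τ → M} {s : Set (MvPolynomial τ K)}
    (hs : RingHom.ker (aeval (R := K) x).toRingHom = Ideal.span s) :
    RingHom.ker (evalRight (K := K) (σ := σ) x).toRingHom =
      Ideal.span (rename Sum.inr '' s) := by
  rw [evalRight_eq, ← RingHom.comap_ker, MvPolynomial.ker_map, hs, Ideal.map_span]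
  refine (Ideal.map_symm (sumAlgEquiv K σ τ).toRingEquiv).symm.trans ?_
  rw [Ideal.map_span, ← Set.image_comp]
  congr 1
  refine Set.image_congr fun p _ => ?_
  exact (AlgEquiv.symm_apply_eq _).2 (DFunLike.congr_fun (sumAlgEquiv_comp_rename_inr K σ τ) p).symm

lemma exists_mem_evalRight_eq {x : τ → M} {J : AddSubgroup (MvPolynomial (σ ⊕ τ) K)}
    {G : MvPolynomial σ M} (h : ∀ d, ∃ p, aeval x p = coeff d G ∧
      rename Sum.inr p * rename Sum.inl (monomial d 1) ∈ J) : ∃ G' ∈ J, evalRight x G' = G := by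
  choose p hp hpJ using h
  refine ⟨∑ d ∈ G.support, rename Sum.inr (p d) * rename Sum.inl (monomial d 1),
    sum_mem fun d _ => hpJ d, ?_⟩
  have hmonomial (d : σ →₀ ℕ) : evalRight x (rename Sum.inl (monomial d (1 : K))) =
      (monomial d (1 : M) : MvPolynomial σ M) := by
    rw [evalRight, aeval_rename, Sum.elim_comp_inl, aeval_monomial, map_one, one_mul,
      monomial_eq, C_1, one_mul]
  rw [map_sum]
  conv_rhs => rw [G.as_sum]
  refine Finset.sum_congr rfl fun d _ => ?_
  rw [map_mul, evalRight_rename_inr, hp, hmonomial, C_mul_monomial, mul_one]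

section Lift

variable {x : τ → M} {E : Set M}
  (hE : ∀ e ∈ E, v e ≤ 1 → ∃ p ∈ almostConstantPolynomials w τ, aeval x p = e)
  {G : MvPolynomial σ M} {f : Polynomial M}
include hE

section

variable (hvw : ∀ a, v (algebraMap K M a) = w a) (hx : ∀ i, v (x i) ≤ 1)
include hvw hx

lemma exists_mem_smallPolynomials_evalRight_eq (hG : G ∈ smallPolynomials v σ)
    (hGE : ∀ d, coeff d G ∈ E) : ∃ G' ∈ smallPolynomials w (σ ⊕ τ), evalRight x G' = G := by
  refine exists_mem_evalRight_eq fun d => ?_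
  obtain ⟨p, hp, hpd⟩ := hE _ (hGE d) (hG d).le
  refine ⟨p, hpd, mul_mem_smallPolynomials (rename_mem_smallPolynomials ?_ _)
    (rename_mem_integralPolynomials (monomial_mem_integralPolynomials d) _)⟩
  exact mem_smallPolynomials_of_valuation_aeval_lt_one hvw hx hp (hpd ▸ hG d)

lemma exists_mem_almostConstantPolynomials_evalRight_eq (hG : G ∈ almostConstantPolynomials v σ)
    (hGE : ∀ d, coeff d G ∈ E) :
    ∃ G' ∈ almostConstantPolynomials w (σ ⊕ τ), evalRight x G' = G := by
  refine exists_mem_evalRight_eq (J := (almostConstantPolynomials w (σ ⊕ τ)).toAddSubgroup)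
    fun d => ?_
  obtain ⟨p, hp, hpd⟩ := hE _ (hGE d) (almostConstantPolynomials_le hG d)
  refine ⟨p, hpd, ?_⟩
  obtain rfl | hd := eq_or_ne d 0
  · rw [← C_apply, C_1, map_one, mul_one]
    exact rename_mem_almostConstantPolynomials hp _
  · refine smallPolynomials_le_almostConstantPolynomials (mul_mem_smallPolynomials
      (rename_mem_smallPolynomials ?_ _)
      (rename_mem_integralPolynomials (monomial_mem_integralPolynomials d) _))
    exact mem_smallPolynomials_of_valuation_aeval_lt_one hvw hx hp
      (hpd ▸ valuation_coeff_lt_one_of_mem_almostConstantPolynomials hG hd)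

end

lemma exists_monic_evalRight_eq_aeval (hf : f.Monic) (hf_le : ∀ k, v (f.coeff k) ≤ 1)
    (hfE : ∀ k, f.coeff k ∈ E) (i : σ) :
    ∃ (f' : Polynomial K) (G : MvPolynomial (σ ⊕ τ) K), f'.Monic ∧ (∀ k, w (f'.coeff k) ≤ 1) ∧
      G - Polynomial.aeval (X (Sum.inl i)) f' ∈ smallPolynomials w (σ ⊕ τ) ∧
      evalRight x G = Polynomial.aeval (X i) f := by
  choose p hp hpf using fun k => hE _ (hfE k) (hf_le k)
  choose a ha hpa using hp
  set n := f.natDegree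
  have hdeg : (∑ k ∈ Finset.range n, Polynomial.C (a k) * Polynomial.X ^ k).degree <
      (n : WithBot ℕ) := by
    rw [← Fin.sum_univ_eq_sum_range fun k => Polynomial.C (a k) * Polynomial.X ^ k]
    exact Polynomial.degree_sum_fin_lt _
  refine ⟨Polynomial.X ^ n + ∑ k ∈ Finset.range n, Polynomial.C (a k) * Polynomial.X ^ k,
    X (Sum.inl i) ^ n + ∑ k ∈ Finset.range n, rename Sum.inr (p k) * X (Sum.inl i) ^ k,
    Polynomial.monic_X_pow_add hdeg, fun k => ?_, ?_, ?_⟩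
  · rw [Polynomial.coeff_add, Polynomial.coeff_X_pow, Polynomial.finsetSum_coeff]
    refine w.map_add_le (by split_ifs <;> simp) (w.map_sum_le fun j _ => ?_)
    rw [Polynomial.coeff_C_mul_X_pow]
    split_ifs
    · exact ha j
    · simp
  · rw [map_add, map_pow, Polynomial.aeval_X, map_sum, add_sub_add_left_eq_sub,
      ← Finset.sum_sub_distrib]
    refine sum_mem fun k _ => ?_
    rw [map_mul, map_pow, Polynomial.aeval_X, Polynomial.aeval_C, ← sub_mul, algebraMap_eq,
      ← rename_C Sum.inr, ← map_sub]
    exact mul_mem_smallPolynomials (rename_mem_smallPolynomials (hpa k) _)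
      (pow_mem (X_mem_integralPolynomials _) k)
  · conv_rhs => rw [hf.as_sum]
    simp only [map_add, map_pow, evalRight_X_inl, Polynomial.aeval_X, map_sum, map_mul,
      evalRight_rename_inr, hpf, Polynomial.aeval_C, algebraMap_eq, n]

end Lift

variable [IsScalarTower K M L]

/-- The concatenation of a monic presentation `T` of `L` over `M` with a monic presentation `S` of
`M` over `K`, given lifts `G` of the relations of `T` along the evaluation of the generators of
`S`. -/
noncomputable def MonicPresentation.trans (T : MonicPresentation v u) (S : MonicPresentation w v)
    (huv : ∀ a, u (algebraMap M L a) = v a) (f : T.ι → Polynomial K)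
    (G : T.ι → MvPolynomial (T.ι ⊕ S.ι) K) (monic : ∀ i, (f i).Monic)
    (coeff_le : ∀ i k, w ((f i).coeff k) ≤ 1)
    (sub_mem : ∀ i, G i - Polynomial.aeval (X (Sum.inl i)) (f i) ∈
      smallPolynomials w (T.ι ⊕ S.ι))
    (evalRight_eq : ∀ i, evalRight S.y (G i) = T.F i) : MonicPresentation w u where
  ι := T.ι ⊕ S.ι
  finite := have := T.finite; have := S.finite; inferInstance
  y := Sum.elim T.y fun j => algebraMap M L (S.y j)
  F := Sum.elim G fun j => rename Sum.inr (S.F j)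
  f := Sum.elim f S.f
  y_le := Sum.rec T.y_le fun i => (huv _).trans_le (S.y_le i)
  monic := Sum.rec monic S.monic
  coeff_le := Sum.rec coeff_le S.coeff_le
  sub_mem := Sum.rec sub_mem fun i => by
    have := rename_mem_smallPolynomials (S.sub_mem i) (Sum.inr : S.ι → T.ι ⊕ S.ι)
    rwa [map_sub, ← Polynomial.aeval_algHom_apply, rename_X] at this
  ker_eq := by
    have haeval : (aeval (R := K) (Sum.elim T.y fun j => algebraMap M L (S.y j))).toRingHom =
        (aeval (R := M) T.y).toRingHom.comp (evalRight (K := K) S.y).toRingHom :=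
      RingHom.ext fun q => (aeval_evalRight S.y T.y q).symm
    rw [haeval, Set.Sum.elim_range]
    refine ker_comp_eq_span (evalRight_surjective S.surjective) ?_ ?_
    · rw [T.ker_eq, ← Set.range_comp]
      exact congrArg (fun F => Ideal.span (Set.range F)) (funext fun i => (evalRight_eq i).symm)
    · rw [ker_evalRight S.ker_eq, ← Set.range_comp]
      rfl
  surjective m := by
    obtain ⟨q, rfl⟩ := T.surjective m
    obtain ⟨q, rfl⟩ := evalRight_surjective (σ := T.ι) S.surjective q
    exact ⟨q, (aeval_evalRight S.y T.y q).symm⟩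

theorem HasMonicPresentations.trans (hvw : ∀ a, v (algebraMap K M a) = w a)
    (huv : ∀ a, u (algebraMap M L a) = v a) (h₁ : HasMonicPresentations w v)
    (h₂ : HasMonicPresentations v u) : HasMonicPresentations w u := by
  intro E hE
  obtain ⟨T, hT⟩ := h₂ E hE
  choose! p hp hpe using hT
  have := T.finite
  obtain ⟨E₁, hE₁, hE₁F, hE₁f, hE₁p⟩ : ∃ E₁ : Set M, E₁.Finite ∧
      (∀ i d, coeff d (T.F i - Polynomial.aeval (X i) (T.f i)) ∈ E₁) ∧
      (∀ i k, (T.f i).coeff k ∈ E₁) ∧ ∀ e ∈ E, ∀ d, coeff d (p e) ∈ E₁ :=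
    ⟨_, ((Set.finite_iUnion fun i => finite_range_mvPolynomial_coeff _).union
      (Set.finite_iUnion fun i => Polynomial.finite_range_coeff _)).union
      (hE.biUnion fun e _ => finite_range_mvPolynomial_coeff _),
      fun i d => Or.inl (Or.inl (Set.mem_iUnion_of_mem i ⟨d, rfl⟩)),
      fun i k => Or.inl (Or.inr (Set.mem_iUnion_of_mem i ⟨k, rfl⟩)),
      fun e he d => Or.inr (Set.mem_biUnion he ⟨d, rfl⟩)⟩
  obtain ⟨S, hS⟩ := h₁ E₁ hE₁
  have hlift (i : T.ι) : ∃ (f : Polynomial K) (G : MvPolynomial (T.ι ⊕ S.ι) K), f.Monic ∧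
      (∀ k, w (f.coeff k) ≤ 1) ∧
      G - Polynomial.aeval (X (Sum.inl i)) f ∈ smallPolynomials w (T.ι ⊕ S.ι) ∧
      evalRight S.y G = T.F i := by
    obtain ⟨f, G, hf, hf_le, hG, hGf⟩ :=
      exists_monic_evalRight_eq_aeval hS (T.monic i) (T.coeff_le i) (hE₁f i) i
    obtain ⟨G', hG', hGF⟩ :=
      exists_mem_smallPolynomials_evalRight_eq hS hvw S.y_le (T.sub_mem i) (hE₁F i)
    refine ⟨f, G + G', hf, hf_le, ?_, by rw [map_add, hGf, hGF, add_sub_cancel]⟩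
    rw [add_sub_right_comm]
    exact add_mem hG hG'
  choose f G hf hf_le hG hGF using hlift
  refine ⟨T.trans S huv f G hf hf_le hG hGF, fun e he hue => ?_⟩
  obtain ⟨G', hG', hGp⟩ := exists_mem_almostConstantPolynomials_evalRight_eq hS hvw S.y_le
    (hp e he hue) (hE₁p e he)
  exact ⟨G', hG', (aeval_evalRight S.y T.y G').symm.trans (by rw [hGp, hpe e he hue])⟩

end Tower

end MonicPresentations

section LevelSystems

open MvPolynomial

variable {K Γ₀ : Type*} [Field K] [LinearOrderedCommGroupWithZero Γ₀]

/-- A presentation of `K[X]` for the valuation `V` on `K[X]` at the level of the key polynomial `Q`: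
the generators are finitely many polynomials `q i` of degree less than that of `Q` and a multiple
`b⁻¹ Q` of `Q` of value one, and the relations `F i`, one for each `q i`, have monic reductions
`f i` in the single variable `X i`. The variable `none` stands for `b⁻¹ Q`. -/
structure LevelSystem (w : Valuation K Γ₀) (V : Valuation (Polynomial K) Γ₀)
    (Q : Polynomial K) where
  ι : Type
  finite : Finite ι
  q : ι → Polynomial K
  natDegree_lt : ∀ i, (q i).natDegree < Q.natDegree
  q_le : ∀ i, V (q i) ≤ 1
  b : K
  b_ne_zero : b ≠ 0
  valuation_b : w b = V Q
  F : ι → MvPolynomial (Option ι) K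
  f : ι → Polynomial K
  monic : ∀ i, (f i).Monic
  coeff_le : ∀ i k, w ((f i).coeff k) ≤ 1
  sub_mem : ∀ i, F i - Polynomial.aeval (X (some i)) (f i) ∈ smallPolynomials w (Option ι)
  surjective : Function.Surjective
    (aeval (R := K) fun o : Option ι => o.elim (Polynomial.C b⁻¹ * Q) q)
  ker_eq : RingHom.ker
    (aeval (R := K) fun o : Option ι => o.elim (Polynomial.C b⁻¹ * Q) q).toRingHom =
      Ideal.span (Set.range F)

namespace LevelSystem

variable {w : Valuation K Γ₀} {V : Valuation (Polynomial K) Γ₀} {Q : Polynomial K} {e : ℕ}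

/-- The generators of a level system. -/
noncomputable def gen (S : LevelSystem w V Q) (o : Option S.ι) : Polynomial K :=
  o.elim (Polynomial.C S.b⁻¹ * Q) S.q

/-- A polynomial is resolved by a level system if it is represented by a scalar times a polynomial
of reduction one; its value is then that of the scalar. -/
def Resolves (S : LevelSystem w V Q) (g : Polynomial K) : Prop :=
  ∃ c : K, ∃ h ∈ smallPolynomials w (Option S.ι), g = Polynomial.C c * aeval S.gen (1 + h)

variable (w V) in
/-- Degree `e` admits level systems: for every monic `Q` of degree `e` and of small enough value
there are level systems at `Q` resolving any given finite set of polynomials of smaller degree. -/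
def ExistsInDegree (e : ℕ) : Prop :=
  ∃ Q₀ : Polynomial K, Q₀.IsMonicOfDegree e ∧ ∀ Q : Polynomial K, Q.IsMonicOfDegree e →
    V Q ≤ V Q₀ → ∀ G : Set (Polynomial K), G.Finite → (∀ g ∈ G, g.natDegree < e) →
      ∃ S : LevelSystem w V Q, ∀ g ∈ G, S.Resolves g

variable (w V) in
/-- The polynomials in `T` are eventually resolved in degree `e`: for every monic `Q` of degree `e`
and of small enough value, they are resolved by all level systems at `Q` which resolve some finite
set of polynomials of smaller degree. -/
def EventuallyResolved (e : ℕ) (T : Set (Polynomial K)) : Prop :=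
  ∃ Q₁ : Polynomial K, Q₁.IsMonicOfDegree e ∧ ∀ Q : Polynomial K, Q.IsMonicOfDegree e →
    V Q ≤ V Q₁ → ∃ G : Set (Polynomial K), G.Finite ∧ (∀ g ∈ G, g.natDegree < e) ∧
      ∀ S : LevelSystem w V Q, (∀ u ∈ G, S.Resolves u) → ∀ g ∈ T, S.Resolves g

variable {S : LevelSystem w V Q} {g g₁ g₂ : Polynomial K}
  {p h : MvPolynomial (Option S.ι) K}

lemma C_b_mul_aeval (S : LevelSystem w V Q) :
    Polynomial.C S.b * aeval S.gen (X none : MvPolynomial (Option S.ι) K) = Q := by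
  rw [aeval_X, gen, Option.elim_none, ← mul_assoc, ← Polynomial.C_mul,
    mul_inv_cancel₀ S.b_ne_zero, Polynomial.C_1, one_mul]

lemma aeval_C_mul (S : LevelSystem w V Q) (a : K) (p : MvPolynomial (Option S.ι) K) :
    aeval S.gen (C a * p) = Polynomial.C a * aeval S.gen p := by
  rw [map_mul, aeval_C, Polynomial.algebraMap_eq]

lemma Resolves.C_mul (hg : S.Resolves g) (a : K) : S.Resolves (Polynomial.C a * g) := by
  obtain ⟨c, h, hh, rfl⟩ := hg
  exact ⟨a * c, h, hh, by rw [Polynomial.C_mul, mul_assoc]⟩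

lemma resolves_C (S : LevelSystem w V Q) (a : K) : S.Resolves (Polynomial.C a) :=
  ⟨a, 0, zero_mem _, by simp⟩

variable (hV : ∀ a, V (Polynomial.C a) = w a)
include hV

lemma gen_le (S : LevelSystem w V Q) (o : Option S.ι) : V (S.gen o) ≤ 1 := by
  cases o with
  | some i => exact S.q_le i
  | none =>
    rw [gen, Option.elim_none, map_mul, hV, map_inv₀, ← S.valuation_b,
      inv_mul_cancel₀ (w.ne_zero_iff.2 S.b_ne_zero)]

lemma valuation_C_mul_one_add (hh : h ∈ smallPolynomials w (Option S.ι)) (c : K) :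
    V (Polynomial.C c * aeval S.gen (1 + h)) = w c := by
  rw [map_mul, hV, map_add, map_one,
    V.map_one_add_of_lt (valuation_aeval_lt_one hV hh (S.gen_le hV)), mul_one]

lemma Resolves.exists_mem_almostConstantPolynomials (hg : S.Resolves g) (hg_le : V g ≤ 1) :
    ∃ p ∈ almostConstantPolynomials w (Option S.ι), aeval S.gen p = g := by
  obtain ⟨c, h, hh, rfl⟩ := hg
  rw [valuation_C_mul_one_add hV hh] at hg_le
  refine ⟨C c * (1 + h), mul_mem (C_mem_almostConstantPolynomials hg_le) (add_mem (one_mem _)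
    (smallPolynomials_le_almostConstantPolynomials hh)), S.aeval_C_mul c _⟩

lemma resolves_aeval (hp : p ∈ almostConstantPolynomials w (Option S.ι))
    (hp_one : V (aeval S.gen p) = 1) : S.Resolves (aeval S.gen p) := by
  obtain ⟨t, -, hpt⟩ := hp
  have ht : w t = 1 := by
    have hlt := valuation_aeval_lt_one hV hpt (S.gen_le hV)
    rw [map_sub, aeval_C, Polynomial.algebraMap_eq, ← hp_one] at hlt
    rw [← hV, ← sub_sub_cancel (aeval S.gen p) (Polynomial.C t), ← hp_one]
    exact V.map_sub_eq_of_lt_left hlt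
  have ht0 : t ≠ 0 := w.ne_zero_iff.1 (ht ▸ one_ne_zero)
  refine ⟨t, C t⁻¹ * (p - C t), mul_mem_smallPolynomials'
    (C_mem_integralPolynomials (by rw [map_inv₀, ht, inv_one])) hpt, ?_⟩
  rw [← aeval_C_mul, mul_add, ← mul_assoc, ← C_mul, mul_inv_cancel₀ ht0, C_1, mul_one, one_mul,
    add_sub_cancel]

lemma Resolves.exists_valuation_eq (hg : S.Resolves g) : ∃ c, w c = V g := by
  obtain ⟨c, h, hh, rfl⟩ := hg
  exact ⟨c, (valuation_C_mul_one_add hV hh c).symm⟩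

lemma Resolves.eq_zero_of_valuation_eq_zero (hg : S.Resolves g) (hg0 : V g = 0) : g = 0 := by
  obtain ⟨c, h, hh, rfl⟩ := hg
  rw [valuation_C_mul_one_add hV hh, map_eq_zero] at hg0
  rw [hg0, Polynomial.C_0, zero_mul]

lemma Resolves.add (h₁ : S.Resolves g₁) (h₂ : S.Resolves g₂) (hle₁ : V g₁ ≤ V (g₁ + g₂))
    (hle₂ : V g₂ ≤ V (g₁ + g₂)) : S.Resolves (g₁ + g₂) := by
  by_cases h0 : V (g₁ + g₂) = 0
  · rw [h0, le_zero_iff] at hle₁ hle₂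
    rw [h₁.eq_zero_of_valuation_eq_zero hV hle₁, h₂.eq_zero_of_valuation_eq_zero hV hle₂,
      add_zero, ← Polynomial.C_0]
    exact S.resolves_C 0
  obtain ⟨c, hc⟩ : ∃ c, w c = V (g₁ + g₂) := by
    obtain hle | hle := le_max_iff.1 (V.map_add g₁ g₂)
    · exact hle₁.antisymm hle ▸ h₁.exists_valuation_eq hV
    · exact hle₂.antisymm hle ▸ h₂.exists_valuation_eq hV
  have hc0 : c ≠ 0 := w.ne_zero_iff.1 (hc ▸ h0)
  have hscale {g : Polynomial K} (hg : V g ≤ V (g₁ + g₂)) : V (Polynomial.C c⁻¹ * g) ≤ 1 := by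
    rw [map_mul, hV, map_inv₀, hc]
    exact inv_mul_le_one_of_le₀ hg zero_le
  obtain ⟨p₁, hp₁, hpg₁⟩ := (h₁.C_mul c⁻¹).exists_mem_almostConstantPolynomials hV (hscale hle₁)
  obtain ⟨p₂, hp₂, hpg₂⟩ := (h₂.C_mul c⁻¹).exists_mem_almostConstantPolynomials hV (hscale hle₂)
  have hsum : aeval S.gen (p₁ + p₂) = Polynomial.C c⁻¹ * (g₁ + g₂) := by
    rw [map_add, hpg₁, hpg₂, mul_add]
  have hone : V (aeval S.gen (p₁ + p₂)) = 1 := by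
    rw [hsum, map_mul, hV, map_inv₀, hc, inv_mul_cancel₀ h0]
  have := (resolves_aeval hV (add_mem hp₁ hp₂) hone).C_mul c
  rwa [hsum, ← mul_assoc, ← Polynomial.C_mul, mul_inv_cancel₀ hc0, Polynomial.C_1, one_mul] at this

lemma Resolves.add_level (hg : S.Resolves g) (hlt : V Q < V g) : S.Resolves (g + Q) := by
  obtain ⟨c, h, hh, rfl⟩ := hg
  rw [valuation_C_mul_one_add hV hh] at hlt
  have hc0 : c ≠ 0 := w.ne_zero_iff.1 (zero_le.trans_lt hlt).ne'
  refine ⟨c, h + C (S.b / c) * X none, add_mem hh (mul_mem_smallPolynomials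
    (C_mem_smallPolynomials ?_) (X_mem_integralPolynomials _)), ?_⟩
  · rw [map_div₀, S.valuation_b]
    exact (div_lt_one₀ (zero_le.trans_lt hlt)).2 hlt
  · rw [← add_assoc, map_add (aeval S.gen) (1 + h), mul_add, aeval_C_mul, ← mul_assoc,
      ← Polynomial.C_mul, mul_div_cancel₀ _ hc0, S.C_b_mul_aeval]

end LevelSystem

end LevelSystems

section LevelSystemExtension

open MvPolynomial

variable {K Γ₀ : Type*} [Field K] [LinearOrderedCommGroupWithZero Γ₀]

namespace LevelSystem

variable {w : Valuation K Γ₀} {V : Valuation (Polynomial K) Γ₀} {Q g g₁ g₂ : Polynomial K} {e : ℕ}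
  {T T₁ T₂ : Set (Polynomial K)}

lemma exists_isMonicOfDegree_le_le {Q₁ Q₂ : Polynomial K} (h₁ : Q₁.IsMonicOfDegree e)
    (h₂ : Q₂.IsMonicOfDegree e) :
    ∃ Q : Polynomial K, Q.IsMonicOfDegree e ∧ V Q ≤ V Q₁ ∧ V Q ≤ V Q₂ := by
  obtain h | h := le_total (V Q₁) (V Q₂)
  · exact ⟨Q₁, h₁, le_rfl, h⟩
  · exact ⟨Q₂, h₂, h, le_rfl⟩

lemma exists_isMonicOfDegree_valuation_lt
    (himm : ∀ g, V g ≠ 0 → ∃ a : K, V (g - Polynomial.C a) < V g) (he : e ≠ 0)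
    (hg : g.IsMonicOfDegree e) (hg0 : V g ≠ 0) :
    ∃ g' : Polynomial K, g'.IsMonicOfDegree e ∧ V g' < V g := by
  obtain ⟨a, ha⟩ := himm g hg0
  exact ⟨_, hg.sub (by rwa [Polynomial.natDegree_C, Nat.pos_iff_ne_zero]), ha⟩

lemma ExistsInDegree.exists_resolves (hL : ExistsInDegree w V e) (hT : EventuallyResolved w V e T) :
    ∃ Q : Polynomial K, Q.IsMonicOfDegree e ∧ ∀ G : Set (Polynomial K), G.Finite →
      (∀ g ∈ G, g.natDegree < e) →
        ∃ S : LevelSystem w V Q, (∀ u ∈ T, S.Resolves u) ∧ ∀ g ∈ G, S.Resolves g := by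
  obtain ⟨Q₀, hQ₀, h₀⟩ := hL
  obtain ⟨Q₁, hQ₁, h₁⟩ := hT
  obtain ⟨Q, hQ, hle₀, hle₁⟩ := exists_isMonicOfDegree_le_le (V := V) hQ₀ hQ₁
  obtain ⟨G₁, hfin, hdeg, h₁⟩ := h₁ Q hQ hle₁
  refine ⟨Q, hQ, fun G hG hGdeg => ?_⟩
  obtain ⟨S, hS⟩ := h₀ Q hQ hle₀ (G₁ ∪ G) (hfin.union hG)
    fun g hg => hg.elim (hdeg g) (hGdeg g)
  exact ⟨S, h₁ S fun u hu => hS u (Or.inl hu), fun g hg => hS g (Or.inr hg)⟩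

namespace EventuallyResolved

lemma empty : EventuallyResolved w V e ∅ :=
  ⟨Polynomial.X ^ e, Polynomial.isMonicOfDegree_X_pow K e,
    fun _ _ _ => ⟨∅, Set.finite_empty, by simp, by simp⟩⟩

lemma union (h₁ : EventuallyResolved w V e T₁) (h₂ : EventuallyResolved w V e T₂) :
    EventuallyResolved w V e (T₁ ∪ T₂) := by
  obtain ⟨Q₁, hQ₁, h₁⟩ := h₁
  obtain ⟨Q₂, hQ₂, h₂⟩ := h₂
  obtain ⟨Q₀, hQ₀, hle₁, hle₂⟩ := exists_isMonicOfDegree_le_le (V := V) hQ₁ hQ₂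
  refine ⟨Q₀, hQ₀, fun Q hQ hle => ?_⟩
  obtain ⟨G₁, hfin₁, hdeg₁, h₁⟩ := h₁ Q hQ (hle.trans hle₁)
  obtain ⟨G₂, hfin₂, hdeg₂, h₂⟩ := h₂ Q hQ (hle.trans hle₂)
  exact ⟨G₁ ∪ G₂, hfin₁.union hfin₂, fun g hg => hg.elim (hdeg₁ g) (hdeg₂ g), fun S hS g hg =>
    hg.elim (h₁ S (fun u hu => hS u (Or.inl hu)) g) (h₂ S (fun u hu => hS u (Or.inr hu)) g)⟩

lemma of_finite (hT : T.Finite) (h : ∀ g ∈ T, EventuallyResolved w V e {g}) :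
    EventuallyResolved w V e T := by
  induction T, hT using Set.Finite.induction_on with
  | empty => exact empty
  | insert _ _ ih =>
    rw [Set.insert_eq]
    exact (h _ (Set.mem_insert _ _)).union (ih fun g hg => h g (Set.mem_insert_of_mem _ hg))

lemma of_imp (hT : EventuallyResolved w V e T)
    (hg : ∀ Q, ∀ S : LevelSystem w V Q, (∀ u ∈ T, S.Resolves u) → S.Resolves g) :
    EventuallyResolved w V e {g} := by
  obtain ⟨Q₁, hQ₁, hT⟩ := hT
  refine ⟨Q₁, hQ₁, fun Q hQ hle => ?_⟩
  obtain ⟨G, hfin, hdeg, hT⟩ := hT Q hQ hle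
  refine ⟨G, hfin, hdeg, fun S hS => ?_⟩
  rintro _ rfl
  exact hg Q S (hT S hS)

lemma of_natDegree_lt (hg : g.natDegree < e) : EventuallyResolved w V e {g} :=
  ⟨Polynomial.X ^ e, Polynomial.isMonicOfDegree_X_pow K e,
    fun _ _ _ => ⟨{g}, Set.finite_singleton g, by simpa using hg, fun _ hS => hS⟩⟩

lemma C_mul (hg : EventuallyResolved w V e {g}) (a : K) :
    EventuallyResolved w V e {Polynomial.C a * g} :=
  hg.of_imp fun _ _ hS => (hS g rfl).C_mul a

end EventuallyResolved

variable (hV : ∀ a, V (Polynomial.C a) = w a)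
include hV

lemma EventuallyResolved.add (h₁ : EventuallyResolved w V e {g₁})
    (h₂ : EventuallyResolved w V e {g₂}) (hle₁ : V g₁ ≤ V (g₁ + g₂)) (hle₂ : V g₂ ≤ V (g₁ + g₂)) :
    EventuallyResolved w V e {g₁ + g₂} :=
  (h₁.union h₂).of_imp fun _ _ hS => (hS g₁ (Or.inl rfl)).add hV (hS g₂ (Or.inr rfl)) hle₁ hle₂

lemma Resolves.of_sub_level {S : LevelSystem w V Q} (hg : S.Resolves (g - Q)) (hlt : V Q < V g) :
    S.Resolves g := by
  have := hg.add_level hV (by rwa [V.map_sub_eq_of_lt_left hlt])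
  rwa [sub_add_cancel] at this

lemma not_eventually_of_valuation_eq_zero (hL : ExistsInDegree w V e) (hg : g ≠ 0) (hg0 : V g = 0) :
    ¬ EventuallyResolved w V e {g} := by
  intro h
  obtain ⟨Q, -, hQ⟩ := hL.exists_resolves h
  obtain ⟨S, hS, -⟩ := hQ ∅ Set.finite_empty (by simp)
  exact hg ((hS g rfl).eq_zero_of_valuation_eq_zero hV hg0)

variable (himm : ∀ g, V g ≠ 0 → ∃ a : K, V (g - Polynomial.C a) < V g)
include himm

lemma exists_valuation_eq (hg : V g ≠ 0) : ∃ a : K, a ≠ 0 ∧ w a = V g := by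
  obtain ⟨a, ha⟩ := himm g hg
  have hag : w a = V g := by
    rw [← hV, ← sub_sub_cancel g (Polynomial.C a)]
    exact V.map_sub_eq_of_lt_left ha
  exact ⟨a, w.ne_zero_iff.1 (hag ▸ hg), hag⟩

lemma EventuallyResolved.of_isMonicOfDegree (he : e ≠ 0) (hg : g.IsMonicOfDegree e)
    (hg0 : V g ≠ 0) : EventuallyResolved w V e {g} := by
  obtain ⟨g', hg', hlt⟩ := exists_isMonicOfDegree_valuation_lt himm he hg hg0
  refine ⟨g', hg', fun Q hQ hle => ⟨{g - Q}, Set.finite_singleton _, ?_, fun S hS => ?_⟩⟩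
  · rintro _ rfl
    exact hg.natDegree_sub_lt he hQ
  · rintro _ rfl
    exact (hS _ rfl).of_sub_level hV (hle.trans_lt hlt)

lemma EventuallyResolved.of_aeval (he : e ≠ 0) (hQ : Q.IsMonicOfDegree e) (S : LevelSystem w V Q)
    {p : MvPolynomial (Option S.ι) K} (hp : p ∈ integralPolynomials w (Option S.ι))
    (hp_one : V (aeval S.gen p) = 1) : EventuallyResolved w V e {aeval S.gen p} := by
  obtain ⟨Q₁, hQ₁, hlt⟩ := exists_isMonicOfDegree_valuation_lt himm he hQ
    (S.valuation_b ▸ w.ne_zero_iff.2 S.b_ne_zero)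
  have := S.finite
  refine ⟨Q₁, hQ₁, fun Q' hQ' hle => ⟨Set.range S.q ∪ {Q - Q'},
    (Set.finite_range _).union (Set.finite_singleton _), ?_, fun S' hS' => ?_⟩⟩
  · rintro _ (⟨i, rfl⟩ | rfl)
    · exact hQ.natDegree_eq ▸ S.natDegree_lt i
    · exact hQ.natDegree_sub_lt he hQ'
  have hgen (o : Option S.ι) : S'.Resolves (S.gen o) := by
    cases o with
    | some i => exact hS' _ (Or.inl ⟨i, rfl⟩)
    | none => exact ((hS' _ (Or.inr rfl)).of_sub_level hV (hle.trans_lt hlt)).C_mul _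
  choose x hx hxS using fun o =>
    (hgen o).exists_mem_almostConstantPolynomials hV (S.gen_le hV o)
  have hcomp : aeval S'.gen (aeval x p) = aeval S.gen p := by
    rw [comp_aeval_apply, funext hxS]
  rintro _ rfl
  rw [← hcomp] at hp_one ⊢
  exact resolves_aeval hV (aeval_mem_almostConstantPolynomials hp hx) hp_one

end LevelSystem

end LevelSystemExtension

section Expansion

open MvPolynomial

lemma exists_last_max {α β : Type*} [LinearOrder α] [LinearOrder β] {s : Finset β}
    (hs : s.Nonempty) (f : β → α) :
    ∃ k ∈ s, (∀ j ∈ s, f j ≤ f k) ∧ ∀ j ∈ s, k < j → f j < f k := by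
  obtain ⟨k, hk, hmax⟩ := s.exists_max_image (fun j => toLex (f j, j)) hs
  simp only [Prod.Lex.toLex_le_toLex'] at hmax
  exact ⟨k, hk, fun j hj => (hmax j hj).1, fun j hj hkj =>
    (hmax j hj).1.lt_of_ne fun h => hkj.not_ge ((hmax j hj).2 h)⟩

lemma exists_eq_sum_mul_pow_of_monic {R : Type*} [CommRing R] {Q : Polynomial R}
    (hQ : Q.Monic) (hdeg : Q.natDegree ≠ 0) (f : Polynomial R) :
    ∃ (n : ℕ) (a : Fin n → Polynomial R), (∀ i, (a i).natDegree < Q.natDegree) ∧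
      f = ∑ i, a i * Q ^ (i : ℕ) := by
  induction hf : f.natDegree using Nat.strong_induction_on generalizing f with
  | _ d ih =>
    obtain hlt | hle := lt_or_ge f.natDegree Q.natDegree
    · exact ⟨1, fun _ => f, fun _ => hlt, by simp⟩
    · obtain ⟨n, a, ha, hfa⟩ := ih (f /ₘ Q).natDegree
        (by rw [Polynomial.natDegree_divByMonic f hQ]; omega) _ rfl
      have hmod : (f %ₘ Q).natDegree < Q.natDegree :=
        Polynomial.natDegree_modByMonic_lt f hQ fun h => hdeg (by rw [h, Polynomial.natDegree_one])
      refine ⟨n + 1, Fin.cons (f %ₘ Q) a, Fin.cases hmod ha, ?_⟩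
      simp only [Fin.sum_univ_succ, Fin.cons_zero, Fin.cons_succ, Fin.val_zero, Fin.val_succ,
        pow_zero, mul_one, pow_succ', mul_left_comm _ Q, ← Finset.mul_sum, ← hfa,
        Polynomial.modByMonic_add_div]

lemma bijective_aeval_of_eq_C_mul_X_add_C {K σ : Type*} [Field K] [Unique σ]
    {x : σ → Polynomial K} {a b : K} (ha : a ≠ 0)
    (hx : x default = Polynomial.C a * Polynomial.X + Polynomial.C b) :
    Function.Bijective (aeval (R := K) x) := by
  let _ := invertibleOfNonzero ha
  have : aeval (R := K) x =
      ((uniqueAlgEquiv K σ).trans (Polynomial.algEquivCMulXAddC a b)).toAlgHom := by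
    refine algHom_ext fun i => ?_
    rw [aeval_X, Unique.eq_default i, hx]
    simp
  rw [this]
  exact AlgEquiv.bijective _

variable {K Γ₀ : Type*} [Field K] [LinearOrderedCommGroupWithZero Γ₀]

lemma exists_monic_valuation_coeff_sub_lt_one (w : Valuation K Γ₀) {p : Polynomial K}
    (hp : p ≠ 0) :
    ∃ c : K, c ≠ 0 ∧ ∃ g : Polynomial K, g.Monic ∧ (∀ k, w (g.coeff k) ≤ 1) ∧
      g.natDegree ≤ p.natDegree ∧ ∀ k, w (p.coeff k / c - g.coeff k) < 1 := by
  classical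
  obtain ⟨k, hk, hmax, hlast⟩ :=
    exists_last_max (Polynomial.support_nonempty.2 hp) fun j => w (p.coeff j)
  have hpk : p.coeff k ≠ 0 := Polynomial.mem_support_iff.1 hk
  have hwk : 0 < w (p.coeff k) := zero_lt_iff.2 (w.ne_zero_iff.2 hpk)
  set g := Polynomial.ofFn (k + 1) fun j => p.coeff j / p.coeff k
  have hcoeff {j : ℕ} (hj : j ≤ k) : g.coeff j = p.coeff j / p.coeff k :=
    Polynomial.ofFn_coeff_eq_val_of_lt _ (Nat.lt_succ_of_le hj)
  have hcoeff_zero {j : ℕ} (hj : k < j) : g.coeff j = 0 :=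
    Polynomial.ofFn_coeff_eq_zero_of_ge _ hj
  have hdeg : g.natDegree ≤ k := Polynomial.natDegree_le_iff_coeff_eq_zero.2 fun _ => hcoeff_zero
  refine ⟨_, hpk, g, Polynomial.monic_of_natDegree_le_of_coeff_eq_one k hdeg
    (by rw [hcoeff le_rfl, div_self hpk]), fun j => ?_,
    hdeg.trans (Polynomial.le_natDegree_of_mem_supp k hk), fun j => ?_⟩
  · obtain hj | hj := le_or_gt j k
    · rw [hcoeff hj, map_div₀]
      by_cases hjs : j ∈ p.support
      · exact (div_le_one₀ hwk).2 (hmax j hjs)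
      · simp [Polynomial.notMem_support_iff.1 hjs]
    · simp [hcoeff_zero hj]
  · obtain hj | hj := le_or_gt j k
    · simp [hcoeff hj]
    · rw [hcoeff_zero hj, sub_zero, map_div₀]
      by_cases hjs : j ∈ p.support
      · exact (div_lt_one₀ hwk).2 (hlast j hjs hj)
      · simp [Polynomial.notMem_support_iff.1 hjs]

lemma sum_C_mul_one_add_mul_pow_sub_aeval_mem_smallPolynomials {w : Valuation K Γ₀} {σ : Type*}
    {n : ℕ} {γ : Fin n → K} {h : Fin n → MvPolynomial σ K} {g : Polynomial K}
    (hh : ∀ i, h i ∈ smallPolynomials w σ) (hg : ∀ k, w (g.coeff k) ≤ 1) (hdeg : g.natDegree < n)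
    (hγ : ∀ i, w (γ i - g.coeff i) < 1) (s : σ) :
    ∑ i, C (γ i) * (1 + h i) * X s ^ (i : ℕ) - Polynomial.aeval (X s) g ∈
      smallPolynomials w σ := by
  rw [Polynomial.aeval_eq_sum_range' hdeg,
    ← Fin.sum_univ_eq_sum_range fun k => g.coeff k • (X s : MvPolynomial σ K) ^ k,
    ← Finset.sum_sub_distrib]
  refine sum_mem fun i _ => ?_
  have hγ_le : w (γ i) ≤ 1 := by
    rw [← sub_add_cancel (γ i) (g.coeff i)]
    exact w.map_add_le (hγ i).le (hg i)
  have hterm : C (γ i) * (1 + h i) * X s ^ (i : ℕ) - g.coeff i • X s ^ (i : ℕ) =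
      (C (γ i - g.coeff i) + C (γ i) * h i) * X s ^ (i : ℕ) := by
    rw [smul_eq_C_mul, C_sub]
    ring
  rw [hterm]
  exact mul_mem_smallPolynomials (add_mem (C_mem_smallPolynomials (hγ i))
    (mul_mem_smallPolynomials' (C_mem_integralPolynomials hγ_le) (hh i)))
    (pow_mem (X_mem_integralPolynomials s) _)

namespace LevelSystem

variable {w : Valuation K Γ₀} {V : Valuation (Polynomial K) Γ₀} {Q : Polynomial K}

/-- A representation of `f` as a scalar times the value at the generators of a polynomial `F` whose
reduction is a monic polynomial `g` in the variable `none`, the one which stands for `Q`. -/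
structure MonicReduction (S : LevelSystem w V Q) (f : Polynomial K) where
  c : K
  c_ne_zero : c ≠ 0
  F : MvPolynomial (Option S.ι) K
  g : Polynomial K
  monic : g.Monic
  coeff_le : ∀ k, w (g.coeff k) ≤ 1
  sub_mem : F - Polynomial.aeval (X none) g ∈ smallPolynomials w (Option S.ι)
  eq : f = Polynomial.C c * aeval S.gen F

lemma nonempty_monicReduction (S : LevelSystem w V Q) {n : ℕ} {a : Fin n → Polynomial K}
    (ha : ∀ i, S.Resolves (a i)) {f : Polynomial K} (hf : f ≠ 0)
    (hfa : f = ∑ i, a i * Q ^ (i : ℕ)) : Nonempty (S.MonicReduction f) := by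
  classical
  choose c h hh hc using ha
  set γ : Fin n → K := fun i => c i * S.b ^ (i : ℕ)
  have hterm (i : Fin n) : a i * Q ^ (i : ℕ) =
      Polynomial.C (γ i) * aeval S.gen ((1 + h i) * X none ^ (i : ℕ)) := by
    have hQ : Q ^ (i : ℕ) = Polynomial.C (S.b ^ (i : ℕ)) *
        aeval S.gen (X none : MvPolynomial (Option S.ι) K) ^ (i : ℕ) := by
      rw [Polynomial.C_pow, ← mul_pow, S.C_b_mul_aeval]
    rw [hc i, hQ, map_mul (aeval S.gen), map_pow (aeval S.gen), Polynomial.C_mul]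
    ring
  have hcoeff (i : Fin n) : (Polynomial.ofFn n γ).coeff i = γ i :=
    Polynomial.ofFn_coeff_eq_val_of_lt γ i.2
  have hp : Polynomial.ofFn n γ ≠ 0 := fun h0 => hf <| hfa.trans <| Finset.sum_eq_zero fun i _ => by
    rw [hterm, ← hcoeff, h0, Polynomial.coeff_zero, Polynomial.C_0, zero_mul]
  obtain ⟨t, ht, g, hg, hg_le, hdeg, hlt⟩ := exists_monic_valuation_coeff_sub_lt_one w hp
  have hdeg_lt : g.natDegree < n := hdeg.trans_lt (Polynomial.ofFn_natDegree_lt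
    (Nat.one_le_iff_ne_zero.2 (Polynomial.ne_zero_of_ofFn_ne_zero hp)) γ)
  refine ⟨⟨t, ht, ∑ i, C (γ i / t) * (1 + h i) * X none ^ (i : ℕ), g, hg, hg_le,
    sum_C_mul_one_add_mul_pow_sub_aeval_mem_smallPolynomials hh hg_le hdeg_lt
      (fun i => by simpa only [hcoeff] using hlt i) none, ?_⟩⟩
  rw [hfa, map_sum, Finset.mul_sum]
  refine Finset.sum_congr rfl fun i _ => ?_
  rw [hterm, mul_assoc (C _), aeval_C_mul, ← mul_assoc, ← Polynomial.C_mul, mul_div_cancel₀ _ ht]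

lemma MonicReduction.mem_integralPolynomials {S : LevelSystem w V Q} {f : Polynomial K}
    (R : S.MonicReduction f) : R.F ∈ integralPolynomials w (Option S.ι) :=
  mem_integralPolynomials_of_sub_mem R.sub_mem
    (polynomial_aeval_mem_integralPolynomials R.coeff_le (X_mem_integralPolynomials none))

lemma exists_one (hV : ∀ a, V (Polynomial.C a) = w a)
    (himm : ∀ g, V g ≠ 0 → ∃ a : K, V (g - Polynomial.C a) < V g)
    (h0 : ∀ t, V (Polynomial.X + Polynomial.C t) ≠ 0) : ExistsInDegree w V 1 := by
  refine ⟨_, Polynomial.isMonicOfDegree_X K, fun Q hQ _ G _ hG => ?_⟩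
  obtain ⟨t, rfl⟩ := Polynomial.isMonicOfDegree_one_iff.1 hQ
  obtain ⟨b, hb0, hb⟩ := exists_valuation_eq hV himm (h0 t)
  have hbij : Function.Bijective (aeval (R := K) fun o : Option Empty =>
      o.elim (Polynomial.C b⁻¹ * (Polynomial.X + Polynomial.C t)) Empty.elim) :=
    bijective_aeval_of_eq_C_mul_X_add_C (b := b⁻¹ * t) (inv_ne_zero hb0)
      (by rw [Polynomial.C_mul, ← mul_add]; rfl)
  refine ⟨⟨Empty, inferInstance, Empty.elim, fun i => i.elim, fun i => i.elim, b, hb0, hb,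
    fun i => i.elim, fun i => i.elim, fun i => i.elim, fun i => i.elim, fun i => i.elim,
    hbij.surjective, ?_⟩, fun g hg => ?_⟩
  · rw [Set.range_eq_empty, Ideal.span_empty]
    exact (RingHom.injective_iff_ker_eq_bot _).1 hbij.injective
  · rw [Polynomial.eq_C_of_natDegree_eq_zero (Nat.lt_one_iff.1 (hG g hg))]
    exact resolves_C _ _

variable {f : Polynomial K} {e : ℕ}

/-- A monic reduction of `f` of value one would make `f` eventually resolved. -/
lemma exists_monicReduction_of_not_eventually (hV : ∀ a, V (Polynomial.C a) = w a)
    (himm : ∀ g, V g ≠ 0 → ∃ a : K, V (g - Polynomial.C a) < V g) (he : e ≠ 0)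
    (hL : ExistsInDegree w V e) (hf : ¬ EventuallyResolved w V e {f}) {T : Set (Polynomial K)}
    (hT : EventuallyResolved w V e T) :
    ∃ (Q : Polynomial K) (S : LevelSystem w V Q) (R : S.MonicReduction f), Q.natDegree = e ∧
      (∀ u ∈ T, S.Resolves u) ∧ V f < w R.c := by
  have hf0 : f ≠ 0 := by
    rintro rfl
    exact hf (EventuallyResolved.of_natDegree_lt
      (by rwa [Polynomial.natDegree_zero, Nat.pos_iff_ne_zero]))
  obtain ⟨Q, hQ, hS⟩ := hL.exists_resolves hT
  obtain ⟨n, a, ha, hfa⟩ :=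
    exists_eq_sum_mul_pow_of_monic hQ.monic (hQ.natDegree_eq.symm ▸ he) f
  obtain ⟨S, hST, hSa⟩ := hS (Set.range a) (Set.finite_range a)
    (Set.forall_mem_range.2 fun i => hQ.natDegree_eq ▸ ha i)
  obtain ⟨R⟩ := S.nonempty_monicReduction (fun i => hSa _ ⟨i, rfl⟩) hf0 hfa
  refine ⟨Q, S, R, hQ.natDegree_eq, hST, ?_⟩
  have hF : V (aeval S.gen R.F) < 1 := by
    refine (valuation_aeval_le_one hV R.mem_integralPolynomials (S.gen_le hV)).lt_of_ne
      fun hone => hf ?_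
    rw [R.eq]
    exact (EventuallyResolved.of_aeval hV himm he hQ S R.mem_integralPolynomials hone).C_mul R.c
  refine (congrArg V R.eq).trans_lt ?_
  rw [map_mul, hV]
  exact mul_lt_of_lt_one_right (zero_lt_iff.2 (w.ne_zero_iff.2 R.c_ne_zero)) hF

end LevelSystem

end Expansion

section SimpleExtensions

open MvPolynomial

lemma aeval_option_elim_X_rename_some {R σ : Type*} [CommRing R] (r p : MvPolynomial σ R) :
    aeval (fun o : Option σ => o.elim r X) (rename some p) = p := by
  rw [aeval_rename]
  exact aeval_X_left_apply p

lemma ker_aeval_option_elim_X {R σ : Type*} [CommRing R] (r : MvPolynomial σ R) :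
    RingHom.ker (aeval (R := R) fun o : Option σ => o.elim r X).toRingHom =
      Ideal.span {X none - rename some r} := by
  set β := aeval (R := R) fun o : Option σ => o.elim r X with hβ
  set I := Ideal.span {X none - rename some r}
  have hcomp : (Ideal.Quotient.mkₐ R I).comp ((rename some).comp β) = Ideal.Quotient.mkₐ R I := by
    refine algHom_ext fun o => ?_
    rw [AlgHom.comp_apply, AlgHom.comp_apply, hβ, aeval_X, Ideal.Quotient.mkₐ_eq_mk]
    cases o with
    | some i => rw [Option.elim_some, rename_X]
    | none =>
      exact ((Ideal.Quotient.mk_eq_mk_iff_sub_mem _ _).2 (Ideal.mem_span_singleton_self _)).symm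
  refine le_antisymm (fun p (hp : β p = 0) => ?_) ?_
  · have := DFunLike.congr_fun hcomp p
    rw [AlgHom.comp_apply, AlgHom.comp_apply, hp, map_zero, map_zero] at this
    exact Ideal.Quotient.eq_zero_iff_mem.1 this.symm
  · rw [Ideal.span_singleton_le_iff_mem]
    change β (X none - rename some r) = 0
    rw [map_sub, aeval_option_elim_X_rename_some, hβ, aeval_X, Option.elim_none, sub_self]

lemma range_option_elim {α β : Type*} (b : β) (f : α → β) :
    Set.range (fun o : Option α => o.elim b f) = Set.range f ∪ {b} := by
  ext y
  simp only [Set.mem_range, Option.exists, Option.elim_none, Option.elim_some, Set.mem_union,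
    Set.mem_singleton_iff, or_comm, eq_comm (a := b)]

variable {K Γ₀ : Type*} [Field K] [LinearOrderedCommGroupWithZero Γ₀]

namespace LevelSystem

variable {w : Valuation K Γ₀} {V : Valuation (Polynomial K) Γ₀} {Q f g : Polynomial K} {d e : ℕ}

namespace MonicReduction

variable {S : LevelSystem w V Q} (R : S.MonicReduction f) {b : K}

/-- The elimination of the variable standing for `b⁻¹ f` by means of `R`. -/
noncomputable def elim (b : K) :
    MvPolynomial (Option (Option S.ι)) K →ₐ[K] MvPolynomial (Option S.ι) K :=
  aeval fun o => o.elim (C (R.c / b) * R.F) X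

lemma elim_rename_some (b : K) (p : MvPolynomial (Option S.ι) K) :
    R.elim b (rename some p) = p :=
  aeval_option_elim_X_rename_some _ _

lemma elim_surjective (b : K) : Function.Surjective (R.elim b) :=
  fun p => ⟨_, R.elim_rename_some b p⟩

lemma aeval_elim_gen (b : K) :
    aeval (fun o : Option (Option S.ι) => o.elim (Polynomial.C b⁻¹ * f) S.gen) =
      (aeval (R := K) S.gen).comp (R.elim b) := by
  refine algHom_ext fun o => ?_
  rw [AlgHom.comp_apply, elim, aeval_X, aeval_X]
  cases o with
  | some o => rw [Option.elim_some, Option.elim_some, aeval_X]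
  | none =>
    rw [Option.elim_none, Option.elim_none, aeval_C_mul, div_eq_inv_mul, Polynomial.C_mul,
      mul_assoc, ← R.eq]

lemma ker_elim (hb : b ≠ 0) :
    RingHom.ker (R.elim b).toRingHom = Ideal.span {rename some R.F - C (b / R.c) * X none} := by
  have hunit : IsUnit (C (-(b / R.c)) : MvPolynomial (Option (Option S.ι)) K) :=
    (isUnit_iff_ne_zero.2 (neg_ne_zero.2 (div_ne_zero hb R.c_ne_zero))).map C
  have hmul : -(b / R.c) * (R.c / b) = -1 := by
    rw [neg_mul, div_mul_div_cancel₀ R.c_ne_zero, div_self hb]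
  rw [elim, ker_aeval_option_elim_X, ← Ideal.span_singleton_mul_left_unit hunit, map_mul, rename_C,
    mul_sub, ← mul_assoc, ← C_mul, hmul, C_neg, C_neg, C_1, neg_one_mul, sub_neg_eq_add, neg_mul,
    neg_add_eq_sub]

lemma rename_sub_aeval_mem_smallPolynomials (hlt : V f < w R.c) (hbf : w b = V f) :
    rename some R.F - C (b / R.c) * X none - Polynomial.aeval (X (some none)) R.g ∈
      smallPolynomials w (Option (Option S.ι)) := by
  have hF := rename_mem_smallPolynomials R.sub_mem (some : Option S.ι → Option (Option S.ι))
  rw [map_sub, ← Polynomial.aeval_algHom_apply, rename_X] at hF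
  rw [sub_right_comm]
  refine AddSubgroup.sub_mem _ hF
    (mul_mem_smallPolynomials (C_mem_smallPolynomials ?_) (X_mem_integralPolynomials _))
  rw [map_div₀, hbf]
  exact (div_lt_one₀ (zero_le.trans_lt hlt)).2 hlt

variable (hV : ∀ a, V (Polynomial.C a) = w a) (hdeg : Q.natDegree < f.natDegree)
  (hlt : V f < w R.c) (hb : b ≠ 0) (hbf : w b = V f)

/-- The level system at `f` obtained from a level system `S` at a polynomial of smaller degree by
adding the generator `b⁻¹ f` and the relation given by a monic reduction of `f`. -/
noncomputable def levelSystem : LevelSystem w V f where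
  ι := Option S.ι
  finite := have := S.finite; inferInstance
  q := S.gen
  natDegree_lt
    | none => (Polynomial.natDegree_C_mul_le _ _).trans_lt hdeg
    | some i => (S.natDegree_lt i).trans hdeg
  q_le := S.gen_le hV
  b := b
  b_ne_zero := hb
  valuation_b := hbf
  F o := o.elim (rename some R.F - C (b / R.c) * X none) fun i => rename some (S.F i)
  f o := o.elim R.g S.f
  monic := Option.rec R.monic S.monic
  coeff_le := Option.rec R.coeff_le S.coeff_le
  sub_mem := Option.rec (R.rename_sub_aeval_mem_smallPolynomials hlt hbf) fun i => by
    have := rename_mem_smallPolynomials (S.sub_mem i) (some : Option S.ι → Option (Option S.ι))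
    rwa [map_sub, ← Polynomial.aeval_algHom_apply, rename_X] at this
  surjective := by
    rw [R.aeval_elim_gen]
    exact S.surjective.comp (R.elim_surjective b)
  ker_eq := by
    rw [R.aeval_elim_gen, range_option_elim]
    refine ker_comp_eq_span (g := (aeval S.gen).toRingHom) (R.elim_surjective b) ?_ (R.ker_elim hb)
    rw [← Set.range_comp]
    exact S.ker_eq.trans (congrArg (fun F => Ideal.span (Set.range F))
      (funext fun i => (R.elim_rename_some b (S.F i)).symm))

lemma resolves_levelSystem (hg : S.Resolves g) :
    (R.levelSystem hV hdeg hlt hb hbf).Resolves g := by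
  obtain ⟨a, h, hh, rfl⟩ := hg
  refine ⟨a, rename some h, rename_mem_smallPolynomials hh _, congrArg _ ?_⟩
  have := DFunLike.congr_fun (R.aeval_elim_gen b) (rename some (1 + h))
  rw [AlgHom.comp_apply, R.elim_rename_some, map_add (rename some), map_one] at this
  exact this.symm

end MonicReduction

lemma exists_isMonicOfDegree_not_eventually (hg : ¬ EventuallyResolved w V e {g}) :
    ∃ n ≤ g.natDegree, ∃ f : Polynomial K, f.IsMonicOfDegree n ∧ ¬ EventuallyResolved w V e {f} ∧
      ∀ u : Polynomial K, u.natDegree < n → EventuallyResolved w V e {u} := by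
  induction hn : g.natDegree using Nat.strong_induction_on generalizing g with
  | _ n ih =>
    by_cases hmin : ∀ u : Polynomial K, u.natDegree < n → EventuallyResolved w V e {u}
    · have hg0 : g.leadingCoeff ≠ 0 := Polynomial.leadingCoeff_ne_zero.2 fun h =>
        hg (EventuallyResolved.empty.of_imp fun _ S _ => by simpa [h] using S.resolves_C 0)
      refine ⟨n, le_rfl, Polynomial.C g.leadingCoeff⁻¹ * g, ⟨?_, ?_⟩, fun h => hg ?_, hmin⟩
      · rw [Polynomial.natDegree_C_mul (inv_ne_zero hg0), hn]
      · rw [mul_comm]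
        exact Polynomial.monic_mul_leadingCoeff_inv (Polynomial.leadingCoeff_ne_zero.1 hg0)
      · have := h.C_mul g.leadingCoeff
        rwa [← mul_assoc, ← Polynomial.C_mul, mul_inv_cancel₀ hg0, Polynomial.C_1, one_mul] at this
    · push Not at hmin
      obtain ⟨u, hu, hue⟩ := hmin
      obtain ⟨m, hm, hf⟩ := ih _ hu hue rfl
      exact ⟨m, hm.trans hu.le, hf⟩

variable (hV : ∀ a, V (Polynomial.C a) = w a)
  (himm : ∀ g, V g ≠ 0 → ∃ a : K, V (g - Polynomial.C a) < V g)
include hV himm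

lemma ExistsInDegree.of_not_eventually (he : e ≠ 0) (hL : ExistsInDegree w V e) (hed : e < d)
    (hf : f.IsMonicOfDegree d) (hfe : ¬ EventuallyResolved w V e {f})
    (hmin : ∀ u : Polynomial K, u.natDegree < d → EventuallyResolved w V e {u})
    (h0 : ∀ u : Polynomial K, u.IsMonicOfDegree d → V u ≠ 0) : ExistsInDegree w V d := by
  refine ⟨f, hf, fun P hP hle G hG hGdeg => ?_⟩
  have hPe : ¬ EventuallyResolved w V e {P} := fun h => hfe <| by
    have := h.add hV (hmin _ (hf.natDegree_sub_lt (Nat.ne_zero_of_lt hed) hP))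
      (by rwa [add_sub_cancel]) (by rw [add_sub_cancel]; exact V.map_sub_le le_rfl hle)
    rwa [add_sub_cancel] at this
  obtain ⟨Q, S, R, hQ, hS, hlt⟩ := exists_monicReduction_of_not_eventually hV himm he hL hPe
    (EventuallyResolved.of_finite hG fun u hu => hmin u (hGdeg u hu))
  obtain ⟨b, hb, hbP⟩ := exists_valuation_eq hV himm (h0 P hP)
  exact ⟨R.levelSystem hV (by rwa [hQ, hP.natDegree_eq]) hlt hb hbP,
    fun u hu => R.resolves_levelSystem hV _ hlt hb hbP (hS u hu)⟩

lemma exists_forall_eventually (hd : 1 < d)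
    (h0 : ∀ g : Polynomial K, g.Monic → g.natDegree < d → V g ≠ 0) :
    ∃ e ≠ 0, ExistsInDegree w V e ∧
      ∀ g : Polynomial K, g.natDegree < d → EventuallyResolved w V e {g} := by
  have hone : ExistsInDegree w V 1 := exists_one hV himm fun t =>
    h0 _ (Polynomial.monic_X_add_C t) (by rwa [Polynomial.natDegree_X_add_C])
  obtain ⟨e, ⟨-, he, hL⟩, hmax⟩ := ((Set.finite_lt_nat d).inter_of_left
    {e | e ≠ 0 ∧ ExistsInDegree w V e}).exists_maximal ⟨1, hd, one_ne_zero, hone⟩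
  refine ⟨e, he, hL, fun g hg => ?_⟩
  by_contra hge
  obtain ⟨n, hn, f, hf, hfe, hmin⟩ := exists_isMonicOfDegree_not_eventually hge
  have hnd : n < d := hn.trans_lt hg
  have hne (u : Polynomial K) (hu : u.IsMonicOfDegree n) : V u ≠ 0 :=
    h0 u hu.monic (by rwa [hu.natDegree_eq])
  have hen : e < n := by
    by_contra! hle
    obtain hlt | rfl := hle.lt_or_eq
    · exact hfe (EventuallyResolved.of_natDegree_lt (by rwa [hf.natDegree_eq]))
    · exact hfe (EventuallyResolved.of_isMonicOfDegree hV himm he hf (hne f hf))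
  exact hen.not_ge (hmax ⟨hnd, Nat.ne_zero_of_lt hen,
    ExistsInDegree.of_not_eventually hV himm he hL hen hf hfe hmin hne⟩ hen.le)

end LevelSystem

variable {M : Type*} [Field M] [Algebra K M] {w : Valuation K Γ₀} {v : Valuation M Γ₀} {x : M}

/-- The presentation of `K[x]` given by a level system together with the relation given by a monic
reduction of a generator `f` of the ideal of relations of `x`. -/
noncomputable def LevelSystem.MonicReduction.monicPresentation {V : Valuation (Polynomial K) Γ₀}
    {Q f : Polynomial K} {S : LevelSystem w V Q} (R : S.MonicReduction f)
    (hVw : ∀ a, V (Polynomial.C a) = w a) (hVv : ∀ g, V g = v (Polynomial.aeval x g))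
    (hker : RingHom.ker (Polynomial.aeval (R := K) x).toRingHom = Ideal.span {f})
    (hsurj : Function.Surjective (Polynomial.aeval (R := K) x)) : MonicPresentation w v where
  ι := Option S.ι
  finite := have := S.finite; inferInstance
  y o := Polynomial.aeval x (S.gen o)
  F o := o.elim R.F S.F
  f o := o.elim R.g S.f
  y_le o := (hVv _).symm.trans_le (S.gen_le hVw o)
  monic := Option.rec R.monic S.monic
  coeff_le := Option.rec R.coeff_le S.coeff_le
  sub_mem := Option.rec R.sub_mem S.sub_mem
  ker_eq := by
    have hunit : IsUnit (Polynomial.C R.c) := (isUnit_iff_ne_zero.2 R.c_ne_zero).map Polynomial.C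
    have hgen : RingHom.ker (aeval (R := K) S.gen).toRingHom = Ideal.span (Set.range S.F) :=
      S.ker_eq
    rw [← comp_aeval, range_option_elim, Set.union_comm]
    refine ker_comp_eq_span (g := (Polynomial.aeval (R := K) x).toRingHom) S.surjective ?_ hgen
    rw [Set.image_singleton, hker]
    conv_lhs => rw [R.eq, Ideal.span_singleton_mul_left_unit hunit]
    rfl
  surjective := by
    rw [← comp_aeval]
    exact hsurj.comp S.surjective

lemma exists_natDegree_lt_natDegree_minpoly_aeval_eq (hx : IsIntegral K x)
    (hsurj : Function.Surjective (Polynomial.aeval (R := K) x)) (m : M) :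
    ∃ g : Polynomial K, g.natDegree < (minpoly K x).natDegree ∧ Polynomial.aeval x g = m := by
  obtain ⟨p, rfl⟩ := hsurj m
  refine ⟨p %ₘ minpoly K x, Polynomial.natDegree_modByMonic_lt p (minpoly.monic hx)
    (minpoly.ne_one K x), ?_⟩
  rw [Polynomial.aeval_modByMonic_eq_self_of_root (minpoly.aeval K x)]

open LevelSystem in
theorem HasMonicPresentations.of_surjective_aeval (hvw : ∀ a, v (algebraMap K M a) = w a)
    (himm : ∀ z : M, z ≠ 0 → ∃ a : K, v (z - algebraMap K M a) < v z) (hx : IsIntegral K x)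
    (hsurj : Function.Surjective (Polynomial.aeval (R := K) x)) :
    HasMonicPresentations w v := by
  choose r hrdeg hr using exists_natDegree_lt_natDegree_minpoly_aeval_eq hx hsurj
  obtain hd | hd := (Nat.succ_le_iff.2 (minpoly.natDegree_pos hx)).eq_or_lt
  · refine of_surjective hvw fun m => ⟨(r m).coeff 0, ?_⟩
    rw [← Polynomial.aeval_C x, ← Polynomial.eq_C_of_natDegree_eq_zero
      (Nat.lt_one_iff.1 ((hrdeg m).trans_eq hd.symm)), hr]
  set V : Valuation (Polynomial K) Γ₀ := v.comap (Polynomial.aeval (R := K) x).toRingHom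
  have hVv (g : Polynomial K) : V g = v (Polynomial.aeval x g) := rfl
  have hV (a : K) : V (Polynomial.C a) = w a := by rw [hVv, Polynomial.aeval_C, hvw]
  have himmV (g : Polynomial K) (hg : V g ≠ 0) : ∃ a : K, V (g - Polynomial.C a) < V g := by
    obtain ⟨a, ha⟩ := himm _ (v.ne_zero_iff.1 hg)
    exact ⟨a, by rwa [hVv, hVv, map_sub, Polynomial.aeval_C]⟩
  have h0 (g : Polynomial K) (hg : g.Monic) (hgd : g.natDegree < (minpoly K x).natDegree) :
      V g ≠ 0 := fun h =>
    hgd.not_ge (Polynomial.natDegree_le_of_dvd (minpoly.dvd K x (v.zero_iff.1 h)) hg.ne_zero)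
  obtain ⟨e, he, hL, hEv⟩ := exists_forall_eventually hV himmV hd h0
  have hminpoly : ¬ EventuallyResolved w V e {minpoly K x} :=
    not_eventually_of_valuation_eq_zero hV hL (minpoly.ne_zero hx)
      (by rw [hVv, minpoly.aeval, map_zero])
  intro E hE
  obtain ⟨Q, S, R, -, hS, -⟩ := exists_monicReduction_of_not_eventually hV himmV he hL hminpoly
    (EventuallyResolved.of_finite (hE.image r) (by rintro _ ⟨m, -, rfl⟩; exact hEv _ (hrdeg m)))
  refine ⟨R.monicPresentation hV hVv (minpoly.ker_aeval_eq_span_minpoly K x) hsurj,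
    fun m hm hvm => ?_⟩
  obtain ⟨p, hp, hpr⟩ := (hS _ ⟨m, hm, rfl⟩).exists_mem_almostConstantPolynomials hV
    (by rwa [hVv, hr])
  refine ⟨p, hp, ?_⟩
  rw [← hr m, ← hpr]
  exact (comp_aeval_apply S.gen (Polynomial.aeval (R := K) x) p).symm

end SimpleExtensions

section FiniteExtensions

open IntermediateField

variable {K K' Γ₀ : Type*} [Field K] [Field K'] [Algebra K K'] [Algebra.IsAlgebraic K K']
  [LinearOrderedCommGroupWithZero Γ₀]

theorem HasMonicPresentations.of_adjoin_finset {w : Valuation K Γ₀} {v : Valuation K' Γ₀}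
    (hvw : ∀ a, v (algebraMap K K' a) = w a)
    (himm : ∀ z : K', z ≠ 0 → ∃ a : K, v (z - algebraMap K K' a) < v z) (S : Finset K') :
    HasMonicPresentations w
      (v.comap (algebraMap (IntermediateField.adjoin K (S : Set K')) K')) := by
  refine induction_on_adjoin_finset S
    (fun L => HasMonicPresentations w (v.comap (algebraMap L K'))) ?_ ?_
  · refine HasMonicPresentations.of_surjective (fun a => hvw a) ?_
    rintro ⟨x, hx⟩
    obtain ⟨a, rfl⟩ := IntermediateField.mem_bot.1 hx
    exact ⟨a, rfl⟩
  · intro L x _ hL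
    have hx : IsIntegral L x := (Algebra.IsAlgebraic.isAlgebraic (R := L) x).isIntegral
    have hLx : HasMonicPresentations (v.comap (algebraMap L K'))
        (v.comap (algebraMap L⟮x⟯ K')) := by
      refine HasMonicPresentations.of_surjective_aeval (x := AdjoinSimple.gen L x)
        (fun a => rfl) ?_ ((AdjoinSimple.isIntegral_gen L x).2 hx) ?_
      · intro z hz
        obtain ⟨a, ha⟩ := himm (algebraMap L⟮x⟯ K' z) (by simpa using hz)
        exact ⟨algebraMap K L a, ha⟩
      · rintro ⟨z, hz⟩
        rw [← IntermediateField.mem_toSubalgebra,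
          adjoin_simple_toSubalgebra_of_isAlgebraic hx.isAlgebraic,
          Algebra.adjoin_singleton_eq_range_aeval] at hz
        obtain ⟨p, rfl⟩ := hz
        refine ⟨p, Subtype.ext ?_⟩
        rw [← IntermediateField.algebraMap_apply, ← Polynomial.aeval_algebraMap_apply,
          AdjoinSimple.algebraMap_gen]
        rfl
    let _ : Algebra L (L⟮x⟯.restrictScalars K) := (inferInstance : Algebra L L⟮x⟯)
    have : IsScalarTower K L (L⟮x⟯.restrictScalars K) :=
      IsScalarTower.of_algebraMap_eq fun _ => rfl
    exact HasMonicPresentations.trans (M := L) (L := L⟮x⟯.restrictScalars K)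
      (fun a => hvw a) (fun a => rfl) hL hLx

end FiniteExtensions

section ValuationRingModels

open MvPolynomial

lemma map_rename_map_C {R σ τ : Type*} [CommRing R] (I : Ideal R) (e : σ → τ) :
    (I.map (C : R →+* MvPolynomial σ R)).map (rename e : MvPolynomial σ R →ₐ[R] _) =
      I.map C := by
  rw [← Ideal.map_coe, Ideal.map_map]
  congr 1
  ext a
  simp

lemma rename_mem_saturation {R σ τ : Type*} [CommRing R] [IsDomain R]
    {P : Ideal (MvPolynomial σ R)} {p : MvPolynomial σ R} (hp : p ∈ saturation P) (e : σ → τ) :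
    rename e p ∈ saturation (P.map (rename e : MvPolynomial σ R →ₐ[R] _)) := by
  obtain ⟨c, hc, h⟩ := hp
  refine ⟨c, hc, ?_⟩
  rw [← rename_C e, ← map_mul]
  exact Ideal.mem_map_of_mem _ h

theorem exists_completeIntersection_subalgebra_of_finite {V V' ι : Type*}
    [CommRing V] [IsDomain V] [ValuationRing V] [CommRing V'] [IsLocalRing V'] [Algebra V V']
    [Finite ι] {F : ι → MvPolynomial ι V} {f : ι → Polynomial V} {y : ι → V'}
    (hf : ∀ i, (f i).Monic)
    (hF : ∀ i, F i - Polynomial.aeval (X i) (f i) ∈ (IsLocalRing.maximalIdeal V).map C)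
    (hm : (IsLocalRing.maximalIdeal V).map (algebraMap V V') ≤ IsLocalRing.maximalIdeal V')
    (hy : ∀ i, aeval y (F i) = 0)
    (hker : ∀ p, aeval y p = 0 → p ∈ saturation (Ideal.span (Set.range F))) :
    ∃ B : Subalgebra V V', Algebra.IsCompleteIntersectionOfFiniteType V B ∧ ∀ i, y i ∈ B := by
  have e := Finite.equivFin ι
  refine (exists_completeIntersection_subalgebra
    (F := fun k => rename e (F (e.symm k))) (f := f ∘ e.symm) (y := y ∘ e.symm)
    (fun k => hf _) (fun k => ?_) hm (fun k => ?_) (fun p hp => ?_)).imp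
      fun B hB => ⟨hB.1, fun i => by simpa using hB.2 (e i)⟩
  · have h := Ideal.mem_map_of_mem (rename e : MvPolynomial ι V →ₐ[V] _) (hF (e.symm k))
    rwa [map_sub, ← Polynomial.aeval_algHom_apply, rename_X, Equiv.apply_symm_apply,
      map_rename_map_C] at h
  · rw [aeval_rename, Function.comp_assoc, e.symm_comp_self, Function.comp_id]
    exact hy _
  · have h := rename_mem_saturation (hker (rename e.symm p) (by rw [aeval_rename]; exact hp)) e
    rw [rename_rename, e.self_comp_symm, rename_id_apply, Ideal.map_span, ← Set.range_comp,
      ← e.symm.surjective.range_comp] at h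
    exact h

attribute [local instance] algebraMvPolynomial in
lemma mem_saturation_of_map_mem_map {A K σ : Type*} [CommRing A] [IsDomain A] [Field K]
    [Algebra A K] [IsFractionRing A K] {P : Ideal (MvPolynomial σ A)} {p : MvPolynomial σ A}
    (h : map (algebraMap A K) p ∈ P.map (map (algebraMap A K))) : p ∈ saturation P := by
  obtain ⟨_, ⟨c, hc, rfl⟩, hcp⟩ := (IsLocalization.algebraMap_mem_map_algebraMap_iff
    ((nonZeroDivisors A).map (C (σ := σ))) (MvPolynomial σ K) P p).1 h
  exact ⟨c, nonZeroDivisors.ne_zero hc, hcp⟩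

lemma mem_maximalIdeal_iff_of_integers {A K Γ₀ : Type*} [CommRing A] [IsLocalRing A] [Field K]
    [Algebra A K] [LinearOrderedCommGroupWithZero Γ₀] {w : Valuation K Γ₀} (hw : w.Integers A)
    {a : A} : a ∈ IsLocalRing.maximalIdeal A ↔ w (algebraMap A K a) < 1 := by
  rw [IsLocalRing.mem_maximalIdeal, mem_nonunits_iff, hw.isUnit_iff_valuation_eq_one]
  exact (hw.map_le_one a).lt_iff_ne.symm

section IntegralModel

variable {A K Γ₀ σ : Type*} [CommRing A] [Field K] [Algebra A K]
  [LinearOrderedCommGroupWithZero Γ₀] {w : Valuation K Γ₀} (hw : w.Integers A)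
include hw

lemma exists_map_algebraMap_eq {p : MvPolynomial σ K} (hp : p ∈ integralPolynomials w σ) :
    ∃ q, map (algebraMap A K) q = p := by
  refine mem_range_map_iff_coeffs_subset.2 fun c hc => ?_
  obtain ⟨d, -, rfl⟩ := mem_coeffs_iff.1 hc
  exact hw.exists_of_le_one (hp d)

lemma exists_monic_map_algebraMap_eq {f : Polynomial K} (hf : f.Monic)
    (hf_le : ∀ k, w (f.coeff k) ≤ 1) :
    ∃ g : Polynomial A, g.Monic ∧ g.map (algebraMap A K) = f := by
  obtain ⟨g, hg, -, hgm⟩ := Polynomial.lifts_and_natDegree_eq_and_monic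
    ((Polynomial.lifts_iff_coeff_lifts _).2 fun k => hw.exists_of_le_one (hf_le k)) hf
  exact ⟨g, hgm, hg⟩

lemma mem_map_C_maximalIdeal_iff [IsLocalRing A] {p : MvPolynomial σ A} :
    p ∈ (IsLocalRing.maximalIdeal A).map C ↔
      map (algebraMap A K) p ∈ smallPolynomials w σ := by
  refine mem_map_C_iff.trans (forall_congr' fun d => ?_)
  rw [coeff_map, mem_maximalIdeal_iff_of_integers hw]

lemma MonicPresentation.exists_integral_model [IsLocalRing A] {M : Type*} [Field M] [Algebra K M]
    {v : Valuation M Γ₀} (S : MonicPresentation w v) (i : S.ι) :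
    ∃ (F : MvPolynomial S.ι A) (f : Polynomial A), f.Monic ∧ map (algebraMap A K) F = S.F i ∧
      F - Polynomial.aeval (X i) f ∈ (IsLocalRing.maximalIdeal A).map C := by
  obtain ⟨f, hf, hfS⟩ := exists_monic_map_algebraMap_eq hw (S.monic i) (S.coeff_le i)
  obtain ⟨F, hF⟩ := exists_map_algebraMap_eq hw (mem_integralPolynomials_of_sub_mem (S.sub_mem i)
    (polynomial_aeval_mem_integralPolynomials (S.coeff_le i) (X_mem_integralPolynomials i)))
  refine ⟨F, f, hf, hF, (mem_map_C_maximalIdeal_iff hw).2 ?_⟩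
  rw [map_sub, hF, map_aeval_X, hfS]
  exact S.sub_mem i

end IntegralModel

theorem MonicPresentation.exists_completeIntersection_subalgebra
    {V V' K L K' Γ₀ : Type*} [CommRing V] [IsDomain V] [ValuationRing V] [CommRing V']
    [IsLocalRing V'] [Algebra V V'] [Field K] [Algebra V K] [Field L] [Algebra K L]
    [Field K'] [Algebra V' K'] [Algebra V K'] [Algebra K K'] [Algebra L K']
    [IsScalarTower V V' K'] [IsScalarTower V K K'] [IsScalarTower K L K']
    [LinearOrderedCommGroupWithZero Γ₀] {v : Valuation K' Γ₀}
    (hV : (v.comap (algebraMap K K')).Integers V) (hV' : v.Integers V')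
    (S : MonicPresentation (v.comap (algebraMap K K')) (v.comap (algebraMap L K'))) :
    ∃ B : Subalgebra V V', Algebra.IsCompleteIntersectionOfFiniteType V B ∧
      ∀ p ∈ integralPolynomials (v.comap (algebraMap K K')) S.ι, ∀ b : V',
        algebraMap V' K' b = algebraMap L K' (aeval S.y p) → b ∈ B := by
  have := S.finite
  have := hV.isFractionRing
  choose y hy using fun i => hV'.exists_of_le_one (S.y_le i)
  choose F f hf hFS hF using S.exists_integral_model hV
  have haeval (p : MvPolynomial S.ι V) : algebraMap V' K' (aeval y p) =
      algebraMap L K' (aeval S.y (map (algebraMap V K) p)) := by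
    rw [← aeval_algebraMap_apply, ← aeval_algebraMap_apply, aeval_map_algebraMap]
    congr 2
    exact funext hy
  have hzero (p : MvPolynomial S.ι V) : aeval y p = 0 ↔
      map (algebraMap V K) p ∈ Ideal.span (Set.range S.F) := by
    rw [← S.ker_eq, RingHom.mem_ker, ← map_eq_zero_iff _ hV'.hom_inj, haeval,
      map_eq_zero_iff _ (algebraMap L K').injective]
    rfl
  have hm : (IsLocalRing.maximalIdeal V).map (algebraMap V V') ≤
      IsLocalRing.maximalIdeal V' := Ideal.map_le_iff_le_comap.2 fun a ha => by
    rw [Ideal.mem_comap, mem_maximalIdeal_iff_of_integers hV', ← IsScalarTower.algebraMap_apply,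
      IsScalarTower.algebraMap_apply V K K']
    exact (mem_maximalIdeal_iff_of_integers hV).1 ha
  obtain ⟨B, hB, hyB⟩ := exists_completeIntersection_subalgebra_of_finite hf hF hm
    (fun i => (hzero _).2 (hFS i ▸ Ideal.subset_span ⟨i, rfl⟩))
    fun p hp => mem_saturation_of_map_mem_map (K := K) <| by
      rw [Ideal.map_span, ← Set.range_comp]
      simpa only [Function.comp_def, hFS] using (hzero p).1 hp
  refine ⟨B, hB, fun p hp b hb => ?_⟩
  obtain ⟨q, rfl⟩ := exists_map_algebraMap_eq hV hp
  rw [hV'.hom_inj (hb.trans (haeval q).symm)]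
  exact aeval_mem_subring (A := B.toSubring) (fun d => B.algebraMap_mem _) hyB

end ValuationRingModels

section ImmediateExtensions

variable {V V' K K' Γ₀ : Type*} [CommRing V] [IsDomain V] [ValuationRing V]
  [CommRing V'] [IsDomain V'] [ValuationRing V'] [Algebra V V']
  [Field K] [Algebra V K] [Field K'] [Algebra V' K']
  [Algebra V K'] [Algebra K K'] [IsScalarTower V V' K'] [IsScalarTower V K K']
  [LinearOrderedCommGroupWithZero Γ₀]

lemma valuationRing_valuation_integers (A F : Type*) [CommRing A] [IsDomain A] [ValuationRing A]
    [Field F] [Algebra A F] [IsFractionRing A F] :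
    (ValuationRing.valuation A F).Integers A where
  hom_inj := IsFractionRing.injective A F
  map_le_one a := (ValuationRing.mem_integer_iff A F _).2 ⟨a, rfl⟩
  exists_of_le_one _ h := (ValuationRing.mem_integer_iff A F _).1 h

namespace IsImmediateExtension

variable (himm : IsImmediateExtension V V') {v : Valuation K' Γ₀} (hv : v.Integers V')
include himm hv

lemma integers_comap [IsFractionRing V K] : (v.comap (algebraMap K K')).Integers V where
  hom_inj := IsFractionRing.injective V K
  map_le_one a := by
    rw [Valuation.comap_apply, ← IsScalarTower.algebraMap_apply,
      IsScalarTower.algebraMap_apply V V' K']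
    exact hv.map_le_one _
  exists_of_le_one a ha := by
    rcases ValuationRing.isInteger_or_isInteger V a with h | ⟨b, hb⟩
    · exact h
    obtain rfl | ha₀ := eq_or_ne a 0
    · exact ⟨0, map_zero _⟩
    have hb_unit : IsUnit b := by
      refine IsLocalRing.notMem_maximalIdeal.1 fun hbm => ha.not_gt ?_
      rw [← himm.2.1, mem_maximalIdeal_iff_of_integers hv, ← IsScalarTower.algebraMap_apply,
        IsScalarTower.algebraMap_apply V K K', hb] at hbm
      rwa [map_inv₀, map_inv₀, inv_lt_one₀ (zero_lt_iff.2 (by simpa using ha₀))] at hbm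
    obtain ⟨u, rfl⟩ := hb_unit
    exact ⟨(u⁻¹ : Vˣ), by rw [map_units_inv, hb, inv_inv]⟩

lemma exists_valuation_algebraMap_eq (x : V') :
    ∃ a : K, v (algebraMap K K' a) = v (algebraMap V' K' x) := by
  obtain rfl | hx := eq_or_ne x 0
  · exact ⟨0, by simp⟩
  obtain ⟨a, b, -, hb, u, hu⟩ := himm.2.2.2 x hx
  have hb₀ : v (algebraMap V' K' (algebraMap V V' b)) ≠ 0 :=
    (hv.valuation_pos_iff_ne_zero.2 ((map_ne_zero_iff _ himm.1).2 hb)).ne'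
  have hab : v (algebraMap V' K' (algebraMap V V' a)) =
      v (algebraMap V' K' x) * v (algebraMap V' K' (algebraMap V V' b)) := by
    rw [← map_mul, ← map_mul, ← hu, map_mul, map_mul, hv.valuation_unit, mul_one]
  refine ⟨algebraMap V K a / algebraMap V K b, ?_⟩
  rw [map_div₀, map_div₀, ← IsScalarTower.algebraMap_apply, ← IsScalarTower.algebraMap_apply,
    IsScalarTower.algebraMap_apply V V' K', IsScalarTower.algebraMap_apply V V' K', hab,
    mul_div_cancel_right₀ _ hb₀]

lemma exists_valuation_eq (z : K') : ∃ a : K, v (algebraMap K K' a) = v z := by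
  have := hv.isFractionRing
  obtain ⟨x, s, -, rfl⟩ := IsFractionRing.div_surjective (A := V') z
  obtain ⟨a, ha⟩ := himm.exists_valuation_algebraMap_eq (K := K) hv x
  obtain ⟨b, hb⟩ := himm.exists_valuation_algebraMap_eq (K := K) hv s
  exact ⟨a / b, by rw [map_div₀, map_div₀, ha, hb, map_div₀]⟩

lemma exists_valuation_sub_lt {z : K'} (hz : z ≠ 0) :
    ∃ a : K, v (z - algebraMap K K' a) < v z := by
  obtain ⟨a, ha⟩ := himm.exists_valuation_eq (K := K) hv z
  have hvz : v z ≠ 0 := v.ne_zero_iff.2 hz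
  have ha₀ : algebraMap K K' a ≠ 0 := v.ne_zero_iff.1 (ha ▸ hvz)
  obtain ⟨c, hc⟩ := hv.exists_of_le_one (r := z / algebraMap K K' a)
    (by rw [map_div₀, ha, div_self hvz])
  obtain ⟨b, hb⟩ := himm.2.2.1 c
  rw [mem_maximalIdeal_iff_of_integers hv, map_sub, hc, ← IsScalarTower.algebraMap_apply,
    IsScalarTower.algebraMap_apply V K K'] at hb
  refine ⟨algebraMap V K b * a, ?_⟩
  have hfactor : z - algebraMap K K' (algebraMap V K b * a) =
      (z / algebraMap K K' a - algebraMap K K' (algebraMap V K b)) * algebraMap K K' a := by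
    rw [sub_mul, div_mul_cancel₀ _ ha₀, map_mul]
  rw [hfactor, map_mul, ha]
  exact mul_lt_of_lt_one_left (zero_lt_iff.2 hvz) hb

omit hv in
variable (K K') in
theorem exists_completeIntersection_subalgebra [IsFractionRing V K] [IsFractionRing V' K']
    [Algebra.IsAlgebraic K K'] (E : Finset V') :
    ∃ B : Subalgebra V V', Algebra.IsCompleteIntersectionOfFiniteType V B ∧ ∀ e ∈ E, e ∈ B := by
  classical
  set v := ValuationRing.valuation V' K'
  have hv : v.Integers V' := valuationRing_valuation_integers V' K'
  let E' : Finset K' := E.image (algebraMap V' K')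
  obtain ⟨S, hS⟩ := HasMonicPresentations.of_adjoin_finset
    (w := v.comap (algebraMap K K')) (v := v)
    (fun _ => rfl) (fun z hz => himm.exists_valuation_sub_lt hv hz) E' ((↑) ⁻¹' (E' : Set K'))
    (E'.finite_toSet.preimage Subtype.val_injective.injOn)
  obtain ⟨B, hB, hBS⟩ := S.exists_completeIntersection_subalgebra (himm.integers_comap hv) hv
  refine ⟨B, hB, fun e he => ?_⟩
  have heE : algebraMap V' K' e ∈ E' := Finset.mem_image_of_mem _ he
  obtain ⟨p, hp, hpe⟩ := hS ⟨algebraMap V' K' e, IntermediateField.subset_adjoin _ _ heE⟩ heE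
    (hv.map_le_one e)
  exact hBS p (almostConstantPolynomials_le hp) e (by rw [hpe]; rfl)

end IsImmediateExtension

end ImmediateExtensions

section FilteredUnion

lemma finiteType_of_isCompleteIntersectionOfFiniteType {R A : Type*} [CommRing R] [CommRing A]
    [Algebra R A] (h : Algebra.IsCompleteIntersectionOfFiniteType R A) :
    Algebra.FiniteType R A := by
  obtain ⟨N, r, f, -, ⟨e⟩⟩ := h
  exact Algebra.FiniteType.equiv inferInstance e

lemma isFilteredUnion_of_forall_finset {R S : Type*} [CommSemiring R] [CommSemiring S]
    [Algebra R S] {P : Subalgebra R S → Prop} (hfg : ∀ A, P A → A.FG)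
    (h : ∀ E : Finset S, ∃ A, P A ∧ ∀ e ∈ E, e ∈ A) : Subalgebra.IsFilteredUnion P := by
  classical
  refine ⟨(h ∅).imp fun _ hA => hA.1, fun A hA B hB => ?_,
    fun s => (h {s}).imp fun _ hA => ⟨hA.1, hA.2 s (Finset.mem_singleton_self s)⟩⟩
  obtain ⟨E, hE⟩ := (hfg A hA).sup (hfg B hB)
  obtain ⟨D, hD, hED⟩ := h E
  have hABD : A ⊔ B ≤ D := hE ▸ Algebra.adjoin_le hED
  exact ⟨D, hD, le_sup_left.trans hABD, le_sup_right.trans hABD⟩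

end FilteredUnion

/-- Let `V ⊆ V'` be an immediate extension of valuation rings with fraction field
extension `K ⊆ K'`.  If `K'/K` is algebraic then `V'` is a filtered union of its
`V`-subalgebras which are complete intersection `V`-algebras of finite type. -/
theorem immediate_extension_filtered_union_complete_intersection_of_algebraic
    (V V' K K' : Type u) [CommRing V] [IsDomain V] [ValuationRing V]
    [CommRing V'] [IsDomain V'] [ValuationRing V'] [Algebra V V']
    [Field K] [Algebra V K] [IsFractionRing V K]
    [Field K'] [Algebra V' K'] [IsFractionRing V' K']
    [Algebra V K'] [Algebra K K'] [IsScalarTower V V' K'] [IsScalarTower V K K']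
    (himm : IsImmediateExtension V V')
    (halg : Algebra.IsAlgebraic K K') :
    Subalgebra.IsFilteredUnion (fun B : Subalgebra V V' =>
      Algebra.IsCompleteIntersectionOfFiniteType V B) := by
  refine isFilteredUnion_of_forall_finset (fun A hA => ?_)
    (himm.exists_completeIntersection_subalgebra K K')
  exact A.fg_iff_finiteType.2 (finiteType_of_isCompleteIntersectionOfFiniteType hA)
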